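/- arXiv:1601.00145 — 2 statements merged into one kernel-verified Lean document; each statement's English description precedes it below -/
import Mathlib

section
/- The maximum number of pairs of points at distance exactly 2 among n ≥ 2 points in ℝ³ with pairwise distances at least 2 is strictly less than 6n − 0.926·n^(2/3). -/
open scoped Classical

noncomputable section

/-- Twice the contact number: the number of ordered pairs of distinct centers in `P`
at distance exactly `2`. -/
def contactsOrdered {d : ℕ} (P : Finset (EuclideanSpace ℝ (Fin d))) : ℕ :=
  (P.offDiag.filter fun p => dist p.1 p.2 = 2).card

/-- The polynomial used in the linear programming bound. -/
def kf (t : ℝ) : ℝ := 1 + 17570/10000 * t + 35088/10000 * ((3 * t ^ 2 - 1) / 2)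
  + 17022/10000 * ((5 * t ^ 3 - 3 * t) / 2) + 19826/10000 * ((35 * t ^ 4 - 30 * t ^ 2 + 3) / 8)
  + 4597/10000 * ((12155 * t ^ 9 - 25740 * t ^ 7 + 18018 * t ^ 5 - 4620 * t ^ 3 + 315 * t) / 128)

lemma kf_p1_0 (t : ℝ) (h1 : (-70711/100000) ≤ t) (h2 : t ≤ (-211/500)) : 0 ≤ -kf t := by
  have e : -kf t = (245844778824516577426624331908220402649622398237/3186779510659880525910506471512095212592896000) * ((t - (-70711/100000)) ^ 0 * ((-211/500) - t) ^ 9) + (1036884173914274761899105610282718216787135372633/15933897553299402629552532357560476062964480) * ((t - (-70711/100000)) ^ 1 * ((-211/500) - t) ^ 8) + (34979483125306890386749855983641904103275805665/99586859708121266434703327234752975393528) * ((t - (-70711/100000)) ^ 2 * ((-211/500) - t) ^ 7) + (1355034661238253848029339797443728079622901375/1778336780502165472048273700620588846313) * ((t - (-70711/100000)) ^ 3 * ((-211/500) - t) ^ 6) + (1521951859802099822742162514732170659226662500/1778336780502165472048273700620588846313) * ((t - (-70711/100000)) ^ 4 * ((-211/500) - t) ^ 5) + (936778131169167218879873740616576316582500000/1778336780502165472048273700620588846313)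 * ((t - (-70711/100000)) ^ 5 * ((-211/500) - t) ^ 4) + (299482132098056902617417639864771711000000000/1778336780502165472048273700620588846313) * ((t - (-70711/100000)) ^ 6 * ((-211/500) - t) ^ 3) + (270131937563493093394263858820726600000000000/12448357463515158304337915904344121924191) * ((t - (-70711/100000)) ^ 7 * ((-211/500) - t) ^ 2) + (1032483409700937964724798921330000000000000/12448357463515158304337915904344121924191) * ((t - (-70711/100000)) ^ 8 * ((-211/500) - t) ^ 1) + (1035488348050943490200373474000000000000000/12448357463515158304337915904344121924191) * ((t - (-70711/100000)) ^ 9 * ((-211/500) - t) ^ 0) := by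
    simp only [kf]; ring
  rw [e]
  have u1 : 0 ≤ t - (-70711/100000) := by linarith
  have u2 : 0 ≤ (-211/500) - t := by linarith
  positivity

lemma kf_p1_1 (t : ℝ) (h1 : (-211/500) ≤ t) (h2 : t ≤ (7/125)) : 0 ≤ -kf t := by
  have e : -kf t = (517744174025471745100186737/651359983216752584847104000) * ((t - (-211/500)) ^ 0 * ((7/125) - t) ^ 9) + (2901597869985861173811339979/162839995804188146211776000) * ((t - (-211/500)) ^ 1 * ((7/125) - t) ^ 8) + (483045096396821176263920897/636093733610109946139750) * ((t - (-211/500)) ^ 2 * ((7/125) - t) ^ 7) + (5534607391236856373476354797/1272187467220219892279500) * ((t - (-211/500)) ^ 3 * ((7/125) - t) ^ 6) + (2984276592776294316614324354/318046866805054973069875) * ((t - (-211/500)) ^ 4 * ((7/125) - t) ^ 5) + (2904279240256124814323812408/318046866805054973069875) * ((t - (-211/500)) ^ 5 * ((7/125) - t) ^ 4) + (1297495962058308070077958144/318046866805054973069875) * ((t - (-211/500)) ^ 6 * ((7/125) - t) ^ 3) + (216306160930454281541348352/318046866805054973069875) * ((t - (-211/500)) ^ 7 * ((7/125) - t) ^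 2) + (489696869725998614040576/318046866805054973069875) * ((t - (-211/500)) ^ 8 * ((7/125) - t) ^ 1) + (249299773452248677859328/318046866805054973069875) * ((t - (-211/500)) ^ 9 * ((7/125) - t) ^ 0) := by
    simp only [kf]; ring
  rw [e]
  have u1 : 0 ≤ t - (-211/500) := by linarith
  have u2 : 0 ≤ (7/125) - t := by linarith
  positivity

lemma kf_p1_2 (t : ℝ) (h1 : (7/125) ≤ t) (h2 : t ≤ (1/2)) : 0 ≤ -kf t := by
  have e : -kf t = (4386609189404713504/2880672212146960125) * ((t - (7/125)) ^ 0 * ((1/2) - t) ^ 9) + (181725669505974608/7681792565725227) * ((t - (7/125)) ^ 1 * ((1/2) - t) ^ 8) + (9994417930492879000/7681792565725227) * ((t - (7/125)) ^ 2 * ((1/2) - t) ^ 7) + (74274006749689375000/7681792565725227) * ((t - (7/125)) ^ 3 * ((1/2) - t) ^ 6) + (931150892953137109375/30727170262900908) * ((t - (7/125)) ^ 4 * ((1/2) - t) ^ 5) + (3014304023760009765625/61454340525801816) * ((t - (7/125)) ^ 5 * ((1/2) - t) ^ 4) + (3490860179779052734375/81939120701069088) * ((t - (7/125)) ^ 6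 * ((1/2) - t) ^ 3) + (4591017136383056640625/245817362103207264) * ((t - (7/125)) ^ 7 * ((1/2) - t) ^ 2) + (25598494243621826171875/7866155587302632448) * ((t - (7/125)) ^ 8 * ((1/2) - t) ^ 1) + (74660778045654296875/47196933523815794688) * ((t - (7/125)) ^ 9 * ((1/2) - t) ^ 0) := by
    simp only [kf]; ring
  rw [e]
  have u1 : 0 ≤ t - (7/125) := by linarith
  have u2 : 0 ≤ (1/2) - t := by linarith
  positivity

lemma kf_p1 (t : ℝ) (h1 : (-70711/100000) ≤ t) (h2 : t ≤ (1/2)) : 0 ≤ -kf t := by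
  rcases le_total t (-211/500) with h | hh0
  · exact kf_p1_0 t h1 h
  rcases le_total t (7/125) with h | hh1
  · exact kf_p1_1 t hh0 h
  exact kf_p1_2 t hh1 h2

lemma kf_p2_0 (t : ℝ) (h1 : (7071/10000) ≤ t) (h2 : t ≤ (8661/10000)) : 0 ≤ (2581/1000) * ((2 * t ^ 2 - 1) * (1 - 7/4 * (3/4 - t ^ 2))) - kf (-t) := by
  have e : (2581/1000) * ((2 * t ^ 2 - 1) * (1 - 7/4 * (3/4 - t ^ 2))) - kf (-t) = (245911790572768645146954693074441778517/16627007175024994262784000000000000) * ((t - (7071/10000)) ^ 0 * ((8661/10000) - t) ^ 9) + (18317070591038714562066507331456653476341/5542335725008331420928000000000000) * ((t - (7071/10000)) ^ 1 * ((8661/10000) - t) ^ 8) + (33449813819014435721973220932114094436231/1385583931252082855232000000000000) * ((t - (7071/10000)) ^ 2 * ((8661/10000) - t) ^ 7) + (104367640000765720912220864673928476659849/1385583931252082855232000000000000) * ((t - (7071/10000)) ^ 3 * ((8661/10000) - t) ^ 6) + (356802409754933853260581593727659503755177/2771167862504165710464000000000000) * ((t - (7071/10000)) ^ 4 * ((8661/10000)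 - t) ^ 5) + (360570497283030501788230876272309754493507/2771167862504165710464000000000000) * ((t - (7071/10000)) ^ 5 * ((8661/10000) - t) ^ 4) + (36248339023995307312812996358043857786393/461861310417360951744000000000000) * ((t - (7071/10000)) ^ 6 * ((8661/10000) - t) ^ 3) + (38023337804465488897171241732028149637181/1385583931252082855232000000000000) * ((t - (7071/10000)) ^ 7 * ((8661/10000) - t) ^ 2) + (29823464367432501856048864454019113280671/5542335725008331420928000000000000) * ((t - (7071/10000)) ^ 8 * ((8661/10000) - t) ^ 1) + (9803530808176170241578479659901814742087/16627007175024994262784000000000000) * ((t - (7071/10000)) ^ 9 * ((8661/10000) - t) ^ 0) := by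
    simp only [kf]; ring
  rw [e]
  have u1 : 0 ≤ t - (7071/10000) := by linarith
  have u2 : 0 ≤ (8661/10000) - t := by linarith
  positivity

lemma kf_p2 (t : ℝ) (h1 : (7071/10000) ≤ t) (h2 : t ≤ (8661/10000)) : 0 ≤ (2581/1000) * ((2 * t ^ 2 - 1) * (1 - 7/4 * (3/4 - t ^ 2))) - kf (-t) := by
  exact kf_p2_0 t h1 h2

lemma kf_p3_0 (t : ℝ) (h1 : (433/500) ≤ t) (h2 : t ≤ (933/1000)) : 0 ≤ (2581/1000) * (51/100 + 51/10 * (t - 87/100)) - kf (-t) := by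
  have e : (2581/1000) * (51/100 + 51/10 * (t - 87/100)) - kf (-t) = (5891154197825766666139767771/13603267198147473500) * ((t - (433/500)) ^ 0 * ((933/1000) - t) ^ 9) + (124738860356772927463140951439/27206534396294947000) * ((t - (433/500)) ^ 1 * ((933/1000) - t) ^ 8) + (241668434336243442855785992939/13603267198147473500) * ((t - (433/500)) ^ 2 * ((933/1000) - t) ^ 7) + (931471277240947432775700413691/27206534396294947000) * ((t - (433/500)) ^ 3 * ((933/1000) - t) ^ 6) + (3826686681555577974666534531573/108826137585179788000) * ((t - (433/500)) ^ 4 * ((933/1000) - t) ^ 5) + (3865829496057356478723551822073/217652275170359576000) * ((t - (433/500)) ^ 5 * ((933/1000) - t) ^ 4) + (597281567356731124170967704191/217652275170359576000) * ((t - (433/500)) ^ 6 * ((933/1000) - t) ^ 3) + (12989569755936025764191200439/435304550340719152000) * ((t - (433/500)) ^ 7 * ((933/1000) - t) ^ 2) + (3141034590111460305549658241939/3482436402725753216000) * ((t - (433/500)) ^ 8 * ((933/1000) - t) ^ 1) + (2749364373733320570586070809271/6964872805451506432000) * ((t - (433/500)) ^ 9 * ((933/1000) - t) ^ 0) := by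
    simp only [kf]; ring
  rw [e]
  have u1 : 0 ≤ t - (433/500) := by linarith
  have u2 : 0 ≤ (933/1000) - t := by linarith
  positivity

lemma kf_p3_1 (t : ℝ) (h1 : (933/1000) ≤ t) (h2 : t ≤ (967/1000)) : 0 ≤ (2581/1000) * (51/100 + 51/10 * (t - 87/100)) - kf (-t) := by
  have e : (2581/1000) * (51/100 + 51/10 * (t - 87/100)) - kf (-t) = (2749364373733320570586070809271/15543550148214784000) * ((t - (933/1000)) ^ 0 * ((967/1000) - t) ^ 9) + (34113162143224016386348680674261/15543550148214784000) * ((t - (933/1000)) ^ 1 * ((967/1000) - t) ^ 8) + (46632035292684976095130338478039/3885887537053696000) * ((t - (933/1000)) ^ 2 * ((967/1000) - t) ^ 7) + (146590320317581615142598615939209/3885887537053696000) * ((t - (933/1000)) ^ 3 * ((967/1000) - t) ^ 6) + (582762773037301534941464172788473/7771775074107392000) * ((t - (933/1000)) ^ 4 * ((967/1000) - t) ^ 5) + (759610794488248837584860679835427/7771775074107392000) * ((t - (933/1000)) ^ 5 * ((967/1000) - t) ^ 4) + (324940747804003286809234594436891/3885887537053696000) * ((t - (933/1000)) ^ 6 *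 ((967/1000) - t) ^ 3) + (176173810165232874433961564110461/3885887537053696000) * ((t - (933/1000)) ^ 7 * ((967/1000) - t) ^ 2) + (219991850583347792411884844701839/15543550148214784000) * ((t - (933/1000)) ^ 8 * ((967/1000) - t) ^ 1) + (30166620368136115654830246708429/15543550148214784000) * ((t - (933/1000)) ^ 9 * ((967/1000) - t) ^ 0) := by
    simp only [kf]; ring
  rw [e]
  have u1 : 0 ≤ t - (933/1000) := by linarith
  have u2 : 0 ≤ (967/1000) - t := by linarith
  positivity

lemma kf_p3 (t : ℝ) (h1 : (433/500) ≤ t) (h2 : t ≤ (967/1000)) : 0 ≤ (2581/1000) * (51/100 + 51/10 * (t - 87/100)) - kf (-t) := by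
  rcases le_total t (933/1000) with h | hh0
  · exact kf_p3_0 t h1 h
  exact kf_p3_1 t hh0 h2

lemma kf_p4_0 (t : ℝ) (h1 : (433/500) ≤ t) (h2 : t ≤ (993/1000)) : 0 ≤ (2581/1000) - kf (-t) := by
  have e : (2581/1000) - kf (-t) = (664562354197825766666139767771/4297377374304698943500) * ((t - (433/500)) ^ 0 * ((993/1000) - t) ^ 9) + (10325851313905348265498327636419/8594754748609397887000) * ((t - (433/500)) ^ 1 * ((993/1000) - t) ^ 8) + (17216737069586333486450467806499/4297377374304698943500) * ((t - (433/500)) ^ 2 * ((993/1000) - t) ^ 7) + (63904894515254267649853991801751/8594754748609397887000) * ((t - (433/500)) ^ 3 * ((993/1000) - t) ^ 6) + (285301171999816763011573686678213/34379018994437591548000) * ((t - (433/500)) ^ 4 * ((993/1000) - t) ^ 5) + (383528064410270764627110117488373/68758037988875183096000) * ((t - (433/500)) ^ 5 * ((993/1000) - t) ^ 4) + (144369895277909911176114100179911/68758037988875183096000) * ((t - (433/500)) ^ 6 * ((993/1000) - t) ^ 3) + (48005809635183221140160812830899/137516075977750366192000) * ((t - (433/500)) ^ 7 * ((993/1000)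 - t) ^ 2) + (5035770761805971253741841454579/1100128607822002929536000) * ((t - (433/500)) ^ 8 * ((993/1000) - t) ^ 1) + (346651875056695257107845380651/2200257215644005859072000) * ((t - (433/500)) ^ 9 * ((993/1000) - t) ^ 0) := by
    simp only [kf]; ring
  rw [e]
  have u1 : 0 ≤ t - (433/500) := by linarith
  have u2 : 0 ≤ (993/1000) - t := by linarith
  positivity

lemma kf_p4_1 (t : ℝ) (h1 : (993/1000) ≤ t) (h2 : t ≤ (1)) : 0 ≤ (2581/1000) - kf (-t) := by
  have e : (2581/1000) - kf (-t) = (346651875056695257107845380651/10330523392000) * ((t - (993/1000)) ^ 0 * ((1) - t) ^ 9) + (2736703705929849468658864163/10330523392) * ((t - (993/1000)) ^ 1 * ((1) - t) ^ 8) + (45081119806387260068324500/40353607) * ((t - (993/1000)) ^ 2 * ((1) - t) ^ 7) + (18616519543006019961218750/5764801) * ((t - (993/1000)) ^ 3 * ((1) - t) ^ 6) + (37604630781768224862500000/5764801) * ((t - (993/1000)) ^ 4 * ((1) - t) ^ 5) + (51652439647482062500000000/5764801) * ((t - (993/1000)) ^ 5 * ((1) - t) ^ 4) + (46760926817000000000000000/5764801)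 * ((t - (993/1000)) ^ 6 * ((1) - t) ^ 3) + (186291068700000000000000000/40353607) * ((t - (993/1000)) ^ 7 * ((1) - t) ^ 2) + (60369900000000000000000000/40353607) * ((t - (993/1000)) ^ 8 * ((1) - t) ^ 1) + (8500000000000000000000000/40353607) * ((t - (993/1000)) ^ 9 * ((1) - t) ^ 0) := by
    simp only [kf]; ring
  rw [e]
  have u1 : 0 ≤ t - (993/1000) := by linarith
  have u2 : 0 ≤ (1) - t := by linarith
  positivity

lemma kf_p4 (t : ℝ) (h1 : (433/500) ≤ t) (h2 : t ≤ (1)) : 0 ≤ (2581/1000) - kf (-t) := by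
  rcases le_total t (993/1000) with h | hh0
  · exact kf_p4_0 t h1 h
  exact kf_p4_1 t hh0 h2

lemma kf_p5_0 (t : ℝ) (h1 : (7071/10000) ≤ t) (h2 : t ≤ (8661/10000)) : 0 ≤ ((49/100 - ((2 * t ^ 2 - 1) * (1 - 7/4 * (3/4 - t ^ 2)))) / (51/10) + 87/100) ^ 2 - ((49/100 - ((2 * t ^ 2 - 1) * (1 - 7/4 * (3/4 - t ^ 2)))) / (51/10) + 87/100) * t + t ^ 2 - 3/4 := by
  have e : ((49/100 - ((2 * t ^ 2 - 1) * (1 - 7/4 * (3/4 - t ^ 2)))) / (51/10) + 87/100) ^ 2 - ((49/100 - ((2 * t ^ 2 - 1) * (1 - 7/4 * (3/4 - t ^ 2)))) / (51/10) + 87/100) * t + t ^ 2 - 3/4 = (1940119219864746749495993946289/4249886562720126776484000000) * ((t - (7071/10000)) ^ 0 * ((8661/10000) - t) ^ 8) + (15582860559666395898793519579099/531235820340015847060500000) * ((t - (7071/10000)) ^ 1 * ((8661/10000) - t) ^ 7) + (168913225705774039418985058357663/1062471640680031694121000000) * ((t - (7071/10000)) ^ 2 * ((8661/10000) - t) ^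 6) + (194173400122916987814963843382933/531235820340015847060500000) * ((t - (7071/10000)) ^ 3 * ((8661/10000) - t) ^ 5) + (189178027226095787742537956606503/424988656272012677648400000) * ((t - (7071/10000)) ^ 4 * ((8661/10000) - t) ^ 4) + (162433735951031191328899097835373/531235820340015847060500000) * ((t - (7071/10000)) ^ 5 * ((8661/10000) - t) ^ 3) + (127851172064346649913264677906543/1062471640680031694121000000) * ((t - (7071/10000)) ^ 6 * ((8661/10000) - t) ^ 2) + (15181773515315267579730492483859/531235820340015847060500000) * ((t - (7071/10000)) ^ 7 * ((8661/10000) - t) ^ 1) + (18198180210694425278874021181969/4249886562720126776484000000) * ((t - (7071/10000)) ^ 8 * ((8661/10000) - t) ^ 0) := by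
    ring
  rw [e]
  have u1 : 0 ≤ t - (7071/10000) := by linarith
  have u2 : 0 ≤ (8661/10000) - t := by linarith
  positivity

lemma kf_p5 (t : ℝ) (h1 : (7071/10000) ≤ t) (h2 : t ≤ (8661/10000)) : 0 ≤ ((49/100 - ((2 * t ^ 2 - 1) * (1 - 7/4 * (3/4 - t ^ 2)))) / (51/10) + 87/100) ^ 2 - ((49/100 - ((2 * t ^ 2 - 1) * (1 - 7/4 * (3/4 - t ^ 2)))) / (51/10) + 87/100) * t + t ^ 2 - 3/4 := by
  exact kf_p5_0 t h1 h2



/-- The ambient space. -/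
abbrev E3 := EuclideanSpace ℝ (Fin 3)

/-- First two coordinates as a complex number. -/
def zc (x : E3) : ℂ := ⟨x 0, x 1⟩

lemma re_pow_rec (z : ℂ) (m : ℕ) :
    (z ^ (m + 2)).re = 2 * z.re * (z ^ (m + 1)).re - Complex.normSq z * (z ^ m).re := by
  have h : z ^ (m + 2) = (2 * z.re : ℝ) * z ^ (m + 1) - (Complex.normSq z : ℝ) * z ^ m := by
    have h1 : z * z = (2 * z.re : ℝ) * z - (Complex.normSq z : ℝ) := by
      apply Complex.ext <;> simp [Complex.normSq_apply] <;> ring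
    calc z ^ (m + 2) = z ^ m * (z * z) := by ring
      _ = _ := by rw [h1]; ring
  rw [h, Complex.sub_re, Complex.re_ofReal_mul, Complex.re_ofReal_mul]

lemma herm_nonneg (X : Finset E3) (q : E3 → ℝ) (m : ℕ) :
    0 ≤ ∑ x ∈ X, ∑ y ∈ X, q x * q y * ((zc x * (starRingEnd ℂ) (zc y)) ^ m).re := by
  have h : ∑ x ∈ X, ∑ y ∈ X, q x * q y * ((zc x * (starRingEnd ℂ) (zc y)) ^ m).re
      = ((∑ x ∈ X, (q x : ℂ) * zc x ^ m) * (starRingEnd ℂ) (∑ y ∈ X, (q y : ℂ) * zc y ^ m)).re := by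
    rw [map_sum, Finset.sum_mul_sum, Complex.re_sum]
    refine Finset.sum_congr rfl fun x _ => ?_
    rw [Complex.re_sum]
    refine Finset.sum_congr rfl fun y _ => ?_
    have : (q x : ℂ) * zc x ^ m * (starRingEnd ℂ) ((q y : ℂ) * zc y ^ m)
        = ((q x * q y : ℝ) : ℂ) * (zc x * (starRingEnd ℂ) (zc y)) ^ m := by
      simp only [map_mul, map_pow, Complex.conj_ofReal, mul_pow, Complex.ofReal_mul]
      ring
    rw [this, Complex.re_ofReal_mul]
  rw [h, Complex.mul_conj]
  simpa using Complex.normSq_nonneg _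

lemma inner_zc (x y : E3) : inner ℝ x y = x 2 * y 2 + (zc x * (starRingEnd ℂ) (zc y)).re := by
  simp [zc, PiLp.inner_apply, Fin.sum_univ_three]
  ring

lemma normSq_zc (x y : E3) (hx : ‖x‖ = 1) (hy : ‖y‖ = 1) :
    Complex.normSq (zc x * (starRingEnd ℂ) (zc y)) = (1 - x 2 ^ 2) * (1 - y 2 ^ 2) := by
  have h : ∀ x : E3, ‖x‖ = 1 → Complex.normSq (zc x) = 1 - x 2 ^ 2 := by
    intro x hx
    have := EuclideanSpace.real_norm_sq_eq x
    rw [hx, Fin.sum_univ_three] at this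
    simp only [zc, Complex.normSq_apply]
    linarith
  rw [map_mul, Complex.normSq_conj, h x hx, h y hy]

lemma leg_id_1 (c d : ℝ) (r : ℕ → ℝ) (h0 : r 0 = 1)
    (hr : ∀ m, r (m + 2) = 2 * r 1 * r (m + 1) - (1 - c ^ 2) * (1 - d ^ 2) * r m) :
    (c * d + r 1) =
      (1) * (((1) * c ^ 1) * ((1) * d ^ 1) * r 0) + (1) * (((1)) * ((1)) * r 1) := by
  rw [h0]
  ring

lemma leg_psd_1 (X : Finset E3) (hX : ∀ x ∈ X, ‖x‖ = 1) :
    0 ≤ ∑ x ∈ X, ∑ y ∈ X, (inner ℝ x y) := by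
  have key : ∑ x ∈ X, ∑ y ∈ X, (inner ℝ x y) =
      (1) * ∑ x ∈ X, ∑ y ∈ X, ((1) * x 2 ^ 1) * ((1) * y 2 ^ 1) * ((zc x * (starRingEnd ℂ) (zc y)) ^ 0).re +
      (1) * ∑ x ∈ X, ∑ y ∈ X, ((1)) * ((1)) * ((zc x * (starRingEnd ℂ) (zc y)) ^ 1).re := by
    simp only [Finset.mul_sum, ← Finset.sum_add_distrib]
    refine Finset.sum_congr rfl fun x hx => Finset.sum_congr rfl fun y hy => ?_
    have := leg_id_1 (x 2) (y 2) (fun m => ((zc x * (starRingEnd ℂ) (zc y)) ^ m).re) (by simp)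
      (fun m => by
        show ((zc x * (starRingEnd ℂ) (zc y)) ^ (m + 2)).re = _
        rw [re_pow_rec, normSq_zc x y (hX x hx) (hX y hy)]; simp only [pow_one])
    rw [inner_zc]
    simp only [pow_one] at this ⊢
    exact this
  rw [key]
  have g0 := herm_nonneg X (fun x => ((1) * x 2 ^ 1)) 0
  have g1 := herm_nonneg X (fun x => ((1))) 1
  positivity

lemma leg_id_2 (c d : ℝ) (r : ℕ → ℝ) (h0 : r 0 = 1)
    (hr : ∀ m, r (m + 2) = 2 * r 1 * r (m + 1) - (1 - c ^ 2) * (1 - d ^ 2) * r m) :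
    ((3 * (c * d + r 1) ^ 2 - 1) / 2) =
      (1) * (((-1/2) + (3/2) * c ^ 2) * ((-1/2) + (3/2) * d ^ 2) * r 0) + (1/3) * (((3) * c ^ 1) * ((3) * d ^ 1) * r 1) + (1/12) * (((3)) * ((3)) * r 2) := by
  have h2 := hr 0
  simp only [Nat.reduceAdd, zero_add, h0] at h2
  rw [h0, h2]
  ring

lemma leg_psd_2 (X : Finset E3) (hX : ∀ x ∈ X, ‖x‖ = 1) :
    0 ≤ ∑ x ∈ X, ∑ y ∈ X, ((3 * (inner ℝ x y) ^ 2 - 1) / 2) := by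
  have key : ∑ x ∈ X, ∑ y ∈ X, ((3 * (inner ℝ x y) ^ 2 - 1) / 2) =
      (1) * ∑ x ∈ X, ∑ y ∈ X, ((-1/2) + (3/2) * x 2 ^ 2) * ((-1/2) + (3/2) * y 2 ^ 2) * ((zc x * (starRingEnd ℂ) (zc y)) ^ 0).re +
      (1/3) * ∑ x ∈ X, ∑ y ∈ X, ((3) * x 2 ^ 1) * ((3) * y 2 ^ 1) * ((zc x * (starRingEnd ℂ) (zc y)) ^ 1).re +
      (1/12) * ∑ x ∈ X, ∑ y ∈ X, ((3)) * ((3)) * ((zc x * (starRingEnd ℂ) (zc y)) ^ 2).re := by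
    simp only [Finset.mul_sum, ← Finset.sum_add_distrib]
    refine Finset.sum_congr rfl fun x hx => Finset.sum_congr rfl fun y hy => ?_
    have := leg_id_2 (x 2) (y 2) (fun m => ((zc x * (starRingEnd ℂ) (zc y)) ^ m).re) (by simp)
      (fun m => by
        show ((zc x * (starRingEnd ℂ) (zc y)) ^ (m + 2)).re = _
        rw [re_pow_rec, normSq_zc x y (hX x hx) (hX y hy)]; simp only [pow_one])
    rw [inner_zc]
    simp only [pow_one] at this ⊢
    exact this
  rw [key]
  have g0 := herm_nonneg X (fun x => ((-1/2) + (3/2) * x 2 ^ 2)) 0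
  have g1 := herm_nonneg X (fun x => ((3) * x 2 ^ 1)) 1
  have g2 := herm_nonneg X (fun x => ((3))) 2
  positivity

lemma leg_id_3 (c d : ℝ) (r : ℕ → ℝ) (h0 : r 0 = 1)
    (hr : ∀ m, r (m + 2) = 2 * r 1 * r (m + 1) - (1 - c ^ 2) * (1 - d ^ 2) * r m) :
    ((5 * (c * d + r 1) ^ 3 - 3 * (c * d + r 1)) / 2) =
      (1) * (((-3/2) * c ^ 1 + (5/2) * c ^ 3) * ((-3/2) * d ^ 1 + (5/2) * d ^ 3) * r 0) + (1/6) * (((-3/2) + (15/2) * c ^ 2) * ((-3/2) + (15/2) * d ^ 2) * r 1) + (1/60) * (((15) * c ^ 1) * ((15) * d ^ 1) * r 2) + (1/360) * (((15)) * ((15)) * r 3) := by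
  have h2 := hr 0
  have h3 := hr 1
  simp only [Nat.reduceAdd, zero_add, h0] at h2 h3
  rw [h0, h3, h2]
  ring

lemma leg_psd_3 (X : Finset E3) (hX : ∀ x ∈ X, ‖x‖ = 1) :
    0 ≤ ∑ x ∈ X, ∑ y ∈ X, ((5 * (inner ℝ x y) ^ 3 - 3 * (inner ℝ x y)) / 2) := by
  have key : ∑ x ∈ X, ∑ y ∈ X, ((5 * (inner ℝ x y) ^ 3 - 3 * (inner ℝ x y)) / 2) =
      (1) * ∑ x ∈ X, ∑ y ∈ X, ((-3/2) * x 2 ^ 1 + (5/2) * x 2 ^ 3) * ((-3/2) * y 2 ^ 1 + (5/2) * y 2 ^ 3) * ((zc x * (starRingEnd ℂ) (zc y)) ^ 0).re +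
      (1/6) * ∑ x ∈ X, ∑ y ∈ X, ((-3/2) + (15/2) * x 2 ^ 2) * ((-3/2) + (15/2) * y 2 ^ 2) * ((zc x * (starRingEnd ℂ) (zc y)) ^ 1).re +
      (1/60) * ∑ x ∈ X, ∑ y ∈ X, ((15) * x 2 ^ 1) * ((15) * y 2 ^ 1) * ((zc x * (starRingEnd ℂ) (zc y)) ^ 2).re +
      (1/360) * ∑ x ∈ X, ∑ y ∈ X, ((15)) * ((15)) * ((zc x * (starRingEnd ℂ) (zc y)) ^ 3).re := by
    simp only [Finset.mul_sum, ← Finset.sum_add_distrib]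
    refine Finset.sum_congr rfl fun x hx => Finset.sum_congr rfl fun y hy => ?_
    have := leg_id_3 (x 2) (y 2) (fun m => ((zc x * (starRingEnd ℂ) (zc y)) ^ m).re) (by simp)
      (fun m => by
        show ((zc x * (starRingEnd ℂ) (zc y)) ^ (m + 2)).re = _
        rw [re_pow_rec, normSq_zc x y (hX x hx) (hX y hy)]; simp only [pow_one])
    rw [inner_zc]
    simp only [pow_one] at this ⊢
    exact this
  rw [key]
  have g0 := herm_nonneg X (fun x => ((-3/2) * x 2 ^ 1 + (5/2) * x 2 ^ 3)) 0
  have g1 := herm_nonneg X (fun x => ((-3/2) + (15/2) * x 2 ^ 2)) 1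
  have g2 := herm_nonneg X (fun x => ((15) * x 2 ^ 1)) 2
  have g3 := herm_nonneg X (fun x => ((15))) 3
  positivity

lemma leg_id_4 (c d : ℝ) (r : ℕ → ℝ) (h0 : r 0 = 1)
    (hr : ∀ m, r (m + 2) = 2 * r 1 * r (m + 1) - (1 - c ^ 2) * (1 - d ^ 2) * r m) :
    ((35 * (c * d + r 1) ^ 4 - 30 * (c * d + r 1) ^ 2 + 3) / 8) =
      (1) * (((3/8) + (-15/4) * c ^ 2 + (35/8) * c ^ 4) * ((3/8) + (-15/4) * d ^ 2 + (35/8) * d ^ 4) * r 0) + (1/10) * (((-15/2) * c ^ 1 + (35/2) * c ^ 3) * ((-15/2) * d ^ 1 + (35/2) * d ^ 3) * r 1) + (1/180) * (((-15/2) + (105/2) * c ^ 2) * ((-15/2) + (105/2) * d ^ 2) * r 2) + (1/2520) * (((105) * c ^ 1) * ((105) * d ^ 1) * r 3) + (1/20160) * (((105)) * ((105)) * r 4) := by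
  have h2 := hr 0
  have h3 := hr 1
  have h4 := hr 2
  simp only [Nat.reduceAdd, zero_add, h0] at h2 h3 h4
  rw [h0, h4, h3, h2]
  ring

lemma leg_psd_4 (X : Finset E3) (hX : ∀ x ∈ X, ‖x‖ = 1) :
    0 ≤ ∑ x ∈ X, ∑ y ∈ X, ((35 * (inner ℝ x y) ^ 4 - 30 * (inner ℝ x y) ^ 2 + 3) / 8) := by
  have key : ∑ x ∈ X, ∑ y ∈ X, ((35 * (inner ℝ x y) ^ 4 - 30 * (inner ℝ x y) ^ 2 + 3) / 8) =
      (1) * ∑ x ∈ X, ∑ y ∈ X, ((3/8) + (-15/4) * x 2 ^ 2 + (35/8) * x 2 ^ 4) * ((3/8) + (-15/4) * y 2 ^ 2 + (35/8) * y 2 ^ 4) * ((zc x * (starRingEnd ℂ) (zc y)) ^ 0).re +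
      (1/10) * ∑ x ∈ X, ∑ y ∈ X, ((-15/2) * x 2 ^ 1 + (35/2) * x 2 ^ 3) * ((-15/2) * y 2 ^ 1 + (35/2) * y 2 ^ 3) * ((zc x * (starRingEnd ℂ) (zc y)) ^ 1).re +
      (1/180) * ∑ x ∈ X, ∑ y ∈ X, ((-15/2) + (105/2) * x 2 ^ 2) * ((-15/2) + (105/2) * y 2 ^ 2) * ((zc x * (starRingEnd ℂ) (zc y)) ^ 2).re +
      (1/2520) * ∑ x ∈ X, ∑ y ∈ X, ((105) * x 2 ^ 1) * ((105) * y 2 ^ 1) * ((zc x * (starRingEnd ℂ) (zc y)) ^ 3).re +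
      (1/20160) * ∑ x ∈ X, ∑ y ∈ X, ((105)) * ((105)) * ((zc x * (starRingEnd ℂ) (zc y)) ^ 4).re := by
    simp only [Finset.mul_sum, ← Finset.sum_add_distrib]
    refine Finset.sum_congr rfl fun x hx => Finset.sum_congr rfl fun y hy => ?_
    have := leg_id_4 (x 2) (y 2) (fun m => ((zc x * (starRingEnd ℂ) (zc y)) ^ m).re) (by simp)
      (fun m => by
        show ((zc x * (starRingEnd ℂ) (zc y)) ^ (m + 2)).re = _
        rw [re_pow_rec, normSq_zc x y (hX x hx) (hX y hy)]; simp only [pow_one])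
    rw [inner_zc]
    simp only [pow_one] at this ⊢
    exact this
  rw [key]
  have g0 := herm_nonneg X (fun x => ((3/8) + (-15/4) * x 2 ^ 2 + (35/8) * x 2 ^ 4)) 0
  have g1 := herm_nonneg X (fun x => ((-15/2) * x 2 ^ 1 + (35/2) * x 2 ^ 3)) 1
  have g2 := herm_nonneg X (fun x => ((-15/2) + (105/2) * x 2 ^ 2)) 2
  have g3 := herm_nonneg X (fun x => ((105) * x 2 ^ 1)) 3
  have g4 := herm_nonneg X (fun x => ((105))) 4
  positivity

lemma leg_id_9 (c d : ℝ) (r : ℕ → ℝ) (h0 : r 0 = 1)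
    (hr : ∀ m, r (m + 2) = 2 * r 1 * r (m + 1) - (1 - c ^ 2) * (1 - d ^ 2) * r m) :
    ((12155 * (c * d + r 1) ^ 9 - 25740 * (c * d + r 1) ^ 7 + 18018 * (c * d + r 1) ^ 5 - 4620 * (c * d + r 1) ^ 3 + 315 * (c * d + r 1)) / 128) =
      (1) * (((315/128) * c ^ 1 + (-1155/32) * c ^ 3 + (9009/64) * c ^ 5 + (-6435/32) * c ^ 7 + (12155/128) * c ^ 9) * ((315/128) * d ^ 1 + (-1155/32) * d ^ 3 + (9009/64) * d ^ 5 + (-6435/32) * d ^ 7 + (12155/128) * d ^ 9) * r 0) + (1/45) * (((315/128) + (-3465/32) * c ^ 2 + (45045/64) * c ^ 4 + (-45045/32) * c ^ 6 + (109395/128) * c ^ 8) * ((315/128) + (-3465/32) * d ^ 2 + (45045/64) * d ^ 4 + (-45045/32) * d ^ 6 + (109395/128) * d ^ 8) * r 1) + (1/3960) * (((-3465/16) * c ^ 1 + (45045/16) * c ^ 3 + (-135135/16) * c ^ 5 + (109395/16) * c ^ 7) * ((-3465/16) * d ^ 1 + (45045/16) * d ^ 3 + (-135135/16) * d ^ 5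 + (109395/16) * d ^ 7) * r 2) + (1/332640) * (((-3465/16) + (135135/16) * c ^ 2 + (-675675/16) * c ^ 4 + (765765/16) * c ^ 6) * ((-3465/16) + (135135/16) * d ^ 2 + (-675675/16) * d ^ 4 + (765765/16) * d ^ 6) * r 3) + (1/25945920) * (((135135/8) * c ^ 1 + (-675675/4) * c ^ 3 + (2297295/8) * c ^ 5) * ((135135/8) * d ^ 1 + (-675675/4) * d ^ 3 + (2297295/8) * d ^ 5) * r 4) + (1/1816214400) * (((135135/8) + (-2027025/4) * c ^ 2 + (11486475/8) * c ^ 4) * ((135135/8) + (-2027025/4) * d ^ 2 + (11486475/8) * d ^ 4) * r 5) + (1/108972864000) * (((-2027025/2) * c ^ 1 + (11486475/2) * c ^ 3) * ((-2027025/2) * d ^ 1 + (11486475/2) * d ^ 3) * r 6) + (1/5230697472000) * (((-2027025/2) + (34459425/2) * c ^ 2) * ((-2027025/2) + (34459425/2) * d ^ 2) * r 7) + (1/177843714048000) * (((34459425) * c ^ 1) * ((34459425) * d ^ 1) * r 8) + (1/3201186852864000) * (((34459425)) * ((34459425)) * r 9) := by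
  have h2 := hr 0
  have h3 := hr 1
  have h4 := hr 2
  have h5 := hr 3
  have h6 := hr 4
  have h7 := hr 5
  have h8 := hr 6
  have h9 := hr 7
  simp only [Nat.reduceAdd, zero_add, h0] at h2 h3 h4 h5 h6 h7 h8 h9
  rw [h0, h9, h8, h7, h6, h5, h4, h3, h2]
  ring

lemma leg_psd_9 (X : Finset E3) (hX : ∀ x ∈ X, ‖x‖ = 1) :
    0 ≤ ∑ x ∈ X, ∑ y ∈ X, ((12155 * (inner ℝ x y) ^ 9 - 25740 * (inner ℝ x y) ^ 7 + 18018 * (inner ℝ x y) ^ 5 - 4620 * (inner ℝ x y) ^ 3 + 315 * (inner ℝ x y)) / 128) := by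
  have key : ∑ x ∈ X, ∑ y ∈ X, ((12155 * (inner ℝ x y) ^ 9 - 25740 * (inner ℝ x y) ^ 7 + 18018 * (inner ℝ x y) ^ 5 - 4620 * (inner ℝ x y) ^ 3 + 315 * (inner ℝ x y)) / 128) =
      (1) * ∑ x ∈ X, ∑ y ∈ X, ((315/128) * x 2 ^ 1 + (-1155/32) * x 2 ^ 3 + (9009/64) * x 2 ^ 5 + (-6435/32) * x 2 ^ 7 + (12155/128) * x 2 ^ 9) * ((315/128) * y 2 ^ 1 + (-1155/32) * y 2 ^ 3 + (9009/64) * y 2 ^ 5 + (-6435/32) * y 2 ^ 7 + (12155/128) * y 2 ^ 9) * ((zc x * (starRingEnd ℂ) (zc y)) ^ 0).re +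
      (1/45) * ∑ x ∈ X, ∑ y ∈ X, ((315/128) + (-3465/32) * x 2 ^ 2 + (45045/64) * x 2 ^ 4 + (-45045/32) * x 2 ^ 6 + (109395/128) * x 2 ^ 8) * ((315/128) + (-3465/32) * y 2 ^ 2 + (45045/64) * y 2 ^ 4 + (-45045/32) * y 2 ^ 6 + (109395/128) * y 2 ^ 8) * ((zc x * (starRingEnd ℂ) (zc y)) ^ 1).re +
      (1/3960) * ∑ x ∈ X, ∑ y ∈ X, ((-3465/16) * x 2 ^ 1 + (45045/16) * x 2 ^ 3 + (-135135/16) * x 2 ^ 5 + (109395/16) * x 2 ^ 7) * ((-3465/16) * y 2 ^ 1 + (45045/16) * y 2 ^ 3 + (-135135/16) * y 2 ^ 5 + (109395/16) * y 2 ^ 7) * ((zc x * (starRingEnd ℂ) (zc y)) ^ 2).re +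
      (1/332640) * ∑ x ∈ X, ∑ y ∈ X, ((-3465/16) + (135135/16) * x 2 ^ 2 + (-675675/16) * x 2 ^ 4 + (765765/16) * x 2 ^ 6) * ((-3465/16) + (135135/16) * y 2 ^ 2 + (-675675/16) * y 2 ^ 4 + (765765/16) * y 2 ^ 6) * ((zc x * (starRingEnd ℂ) (zc y)) ^ 3).re +
      (1/25945920) * ∑ x ∈ X, ∑ y ∈ X, ((135135/8) * x 2 ^ 1 + (-675675/4) * x 2 ^ 3 + (2297295/8) * x 2 ^ 5) * ((135135/8) * y 2 ^ 1 + (-675675/4) * y 2 ^ 3 + (2297295/8) * y 2 ^ 5) * ((zc x * (starRingEnd ℂ) (zc y)) ^ 4).re +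
      (1/1816214400) * ∑ x ∈ X, ∑ y ∈ X, ((135135/8) + (-2027025/4) * x 2 ^ 2 + (11486475/8) * x 2 ^ 4) * ((135135/8) + (-2027025/4) * y 2 ^ 2 + (11486475/8) * y 2 ^ 4) * ((zc x * (starRingEnd ℂ) (zc y)) ^ 5).re +
      (1/108972864000) * ∑ x ∈ X, ∑ y ∈ X, ((-2027025/2) * x 2 ^ 1 + (11486475/2) * x 2 ^ 3) * ((-2027025/2) * y 2 ^ 1 + (11486475/2) * y 2 ^ 3) * ((zc x * (starRingEnd ℂ) (zc y)) ^ 6).re +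
      (1/5230697472000) * ∑ x ∈ X, ∑ y ∈ X, ((-2027025/2) + (34459425/2) * x 2 ^ 2) * ((-2027025/2) + (34459425/2) * y 2 ^ 2) * ((zc x * (starRingEnd ℂ) (zc y)) ^ 7).re +
      (1/177843714048000) * ∑ x ∈ X, ∑ y ∈ X, ((34459425) * x 2 ^ 1) * ((34459425) * y 2 ^ 1) * ((zc x * (starRingEnd ℂ) (zc y)) ^ 8).re +
      (1/3201186852864000) * ∑ x ∈ X, ∑ y ∈ X, ((34459425)) * ((34459425)) * ((zc x * (starRingEnd ℂ) (zc y)) ^ 9).re := by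
    simp only [Finset.mul_sum, ← Finset.sum_add_distrib]
    refine Finset.sum_congr rfl fun x hx => Finset.sum_congr rfl fun y hy => ?_
    have := leg_id_9 (x 2) (y 2) (fun m => ((zc x * (starRingEnd ℂ) (zc y)) ^ m).re) (by simp)
      (fun m => by
        show ((zc x * (starRingEnd ℂ) (zc y)) ^ (m + 2)).re = _
        rw [re_pow_rec, normSq_zc x y (hX x hx) (hX y hy)]; simp only [pow_one])
    rw [inner_zc]
    simp only [pow_one] at this ⊢
    exact this
  rw [key]
  have g0 := herm_nonneg X (fun x => ((315/128) * x 2 ^ 1 + (-1155/32) * x 2 ^ 3 + (9009/64) * x 2 ^ 5 + (-6435/32) * x 2 ^ 7 + (12155/128) * x 2 ^ 9)) 0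
  have g1 := herm_nonneg X (fun x => ((315/128) + (-3465/32) * x 2 ^ 2 + (45045/64) * x 2 ^ 4 + (-45045/32) * x 2 ^ 6 + (109395/128) * x 2 ^ 8)) 1
  have g2 := herm_nonneg X (fun x => ((-3465/16) * x 2 ^ 1 + (45045/16) * x 2 ^ 3 + (-135135/16) * x 2 ^ 5 + (109395/16) * x 2 ^ 7)) 2
  have g3 := herm_nonneg X (fun x => ((-3465/16) + (135135/16) * x 2 ^ 2 + (-675675/16) * x 2 ^ 4 + (765765/16) * x 2 ^ 6)) 3
  have g4 := herm_nonneg X (fun x => ((135135/8) * x 2 ^ 1 + (-675675/4) * x 2 ^ 3 + (2297295/8) * x 2 ^ 5)) 4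
  have g5 := herm_nonneg X (fun x => ((135135/8) + (-2027025/4) * x 2 ^ 2 + (11486475/8) * x 2 ^ 4)) 5
  have g6 := herm_nonneg X (fun x => ((-2027025/2) * x 2 ^ 1 + (11486475/2) * x 2 ^ 3)) 6
  have g7 := herm_nonneg X (fun x => ((-2027025/2) + (34459425/2) * x 2 ^ 2)) 7
  have g8 := herm_nonneg X (fun x => ((34459425) * x 2 ^ 1)) 8
  have g9 := herm_nonneg X (fun x => ((34459425))) 9
  positivity



lemma psd_proj (e : E3) (he : ‖e‖ = 1) (Z : Finset E3) (c : E3 → ℝ) :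
    0 ≤ ∑ z ∈ Z, ∑ w ∈ Z, c z * c w * (inner ℝ z w - inner ℝ z e * inner ℝ w e) := by
  set v : E3 := ∑ z ∈ Z, c z • z with hv
  have h1 : ∑ z ∈ Z, ∑ w ∈ Z, c z * c w * (inner ℝ z w - inner ℝ z e * inner ℝ w e)
      = inner ℝ v v - inner ℝ v e * inner ℝ v e := by
    have a1 : inner ℝ v v = ∑ z ∈ Z, ∑ w ∈ Z, c z * c w * inner ℝ z w := by
      rw [hv, sum_inner]
      refine Finset.sum_congr rfl fun z _ => ?_
      rw [inner_sum]
      refine Finset.sum_congr rfl fun w _ => ?_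
      rw [real_inner_smul_left, real_inner_smul_right]; ring
    have a2 : inner ℝ v e = ∑ z ∈ Z, c z * inner ℝ z e := by
      rw [hv, sum_inner]
      refine Finset.sum_congr rfl fun z _ => ?_
      rw [real_inner_smul_left]
    rw [a1, a2, Finset.sum_mul_sum, ← Finset.sum_sub_distrib]
    refine Finset.sum_congr rfl fun z _ => ?_
    rw [← Finset.sum_sub_distrib]
    refine Finset.sum_congr rfl fun w _ => ?_
    ring
  rw [h1, real_inner_self_eq_norm_sq]
  have h2 := abs_real_inner_le_norm v e
  rw [he, mul_one] at h2
  have h3 := sq_le_sq' (by linarith [neg_abs_le (inner ℝ v e), h2] : -‖v‖ ≤ inner ℝ v e)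
    (le_trans (le_abs_self _) h2)
  nlinarith

lemma pair_bound (s y : ℝ) (hs : 0 ≤ s) (hy : 0 ≤ y) (hs2 : 1 / 2 ≤ s ^ 2) (hy2 : 1 / 2 ≤ y ^ 2) :
    √(s ^ 2 - 1 / 2) * √(y ^ 2 - 1 / 2) ≤ s * y - 1 / 2 := by
  rw [← Real.sqrt_mul (by linarith)]
  apply Real.sqrt_le_iff.2
  constructor
  · have h : (1 / 2 : ℝ) ^ 2 ≤ (s * y) ^ 2 := by rw [mul_pow]; nlinarith
    have := abs_le_of_sq_le_sq' h (by positivity)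
    linarith [this.2]
  · nlinarith [sq_nonneg (s - y)]

/-- The quadratic form bound for a family of caps. -/
lemma quad_bound (e : E3) (Z : Finset E3) (hu : ∀ z ∈ Z, ‖z‖ = 1)
    (hp : ∀ z ∈ Z, ∀ w ∈ Z, z ≠ w → inner ℝ z w ≤ 1 / 2)
    (h0 : ∀ z ∈ Z, 0 ≤ inner ℝ z e) (h2 : ∀ z ∈ Z, 1 / 2 ≤ (inner ℝ z e) ^ 2) :
    ∑ z ∈ Z, ∑ w ∈ Z, (2 * √((inner ℝ z e) ^ 2 - 1 / 2)) * (2 * √((inner ℝ w e) ^ 2 - 1 / 2)) *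
      (inner ℝ z w - inner ℝ z e * inner ℝ w e)
      ≤ (∑ z ∈ Z, (2 * (inner ℝ z e) ^ 2 - 1)) - (∑ z ∈ Z, (2 * (inner ℝ z e) ^ 2 - 1)) ^ 2 := by
  have hR : (∑ z ∈ Z, (2 * (inner ℝ z e) ^ 2 - 1)) - (∑ z ∈ Z, (2 * (inner ℝ z e) ^ 2 - 1)) ^ 2
      = ∑ z ∈ Z, ∑ w ∈ Z, ((if z = w then (2 * (inner ℝ z e) ^ 2 - 1) else 0)
        - (2 * (inner ℝ z e) ^ 2 - 1) * (2 * (inner ℝ w e) ^ 2 - 1)) := by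
    rw [sq, Finset.sum_mul_sum, ← Finset.sum_sub_distrib]
    refine Finset.sum_congr rfl fun z hz => ?_
    rw [Finset.sum_sub_distrib, Finset.sum_ite_eq, if_pos hz]
  rw [hR]
  refine Finset.sum_le_sum fun z hz => Finset.sum_le_sum fun w hw => ?_
  have q1 := Real.sq_sqrt (show 0 ≤ (inner ℝ z e) ^ 2 - 1 / 2 by linarith [h2 z hz])
  have q2 := Real.sq_sqrt (show 0 ≤ (inner ℝ w e) ^ 2 - 1 / 2 by linarith [h2 w hw])
  by_cases hzw : z = w
  · subst hzw
    rw [if_pos rfl, real_inner_self_eq_norm_sq, hu z hz]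
    set r := √((inner ℝ z e) ^ 2 - 1 / 2)
    set s : ℝ := inner ℝ z e
    apply le_of_eq
    have : 2 * r * (2 * r) = 4 * r ^ 2 := by ring
    rw [this, q1]; ring
  · rw [if_neg hzw]
    have hb := pair_bound _ _ (h0 z hz) (h0 w hw) (h2 z hz) (h2 w hw)
    have hi := hp z hz w hw hzw
    have hr1 := Real.sqrt_nonneg ((inner ℝ z e) ^ 2 - 1 / 2)
    have hr2 := Real.sqrt_nonneg ((inner ℝ w e) ^ 2 - 1 / 2)
    set r := √((inner ℝ z e) ^ 2 - 1 / 2)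
    set r' := √((inner ℝ w e) ^ 2 - 1 / 2)
    set s : ℝ := inner ℝ z e
    set s' : ℝ := inner ℝ w e
    have e1 : 2 * s ^ 2 - 1 = 2 * r ^ 2 := by linarith
    have e2 : 2 * s' ^ 2 - 1 = 2 * r' ^ 2 := by linarith
    rw [e1, e2]
    have := mul_le_mul_of_nonneg_left (show inner ℝ z w - s * s' ≤ - (r * r') by linarith)
      (show 0 ≤ 4 * (r * r') by positivity)
    nlinarith

lemma T_le_one (e : E3) (he : ‖e‖ = 1) (Z : Finset E3) (hu : ∀ z ∈ Z, ‖z‖ = 1)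
    (hp : ∀ z ∈ Z, ∀ w ∈ Z, z ≠ w → inner ℝ z w ≤ 1 / 2)
    (h0 : ∀ z ∈ Z, 0 ≤ inner ℝ z e) (h2 : ∀ z ∈ Z, 1 / 2 ≤ (inner ℝ z e) ^ 2) :
    ∑ z ∈ Z, (2 * (inner ℝ z e) ^ 2 - 1) ≤ 1 := by
  have a := quad_bound e Z hu hp h0 h2
  have b := psd_proj e he Z (fun z => 2 * √((inner ℝ z e) ^ 2 - 1 / 2))
  have c := b.trans a
  nlinarith

lemma high_bound (e : E3) (he : ‖e‖ = 1) (Z : Finset E3) (hu : ∀ z ∈ Z, ‖z‖ = 1)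
    (hp : ∀ z ∈ Z, ∀ w ∈ Z, z ≠ w → inner ℝ z w ≤ 1 / 2)
    (h0 : ∀ z ∈ Z, 0 ≤ inner ℝ z e) (h2 : ∀ z ∈ Z, 1 / 2 ≤ (inner ℝ z e) ^ 2)
    (h : E3) (hh : ‖h‖ = 1) (hZ : h ∉ Z) (hhZ : ∀ z ∈ Z, inner ℝ h z ≤ 1 / 2) (α β : ℝ)
    (hα : 0 ≤ α)
    (hβ : ∀ z ∈ Z, β * √((inner ℝ z e) ^ 2 - 1 / 2) ≤ inner ℝ h e * inner ℝ z e - 1 / 2) :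
    0 ≤ α ^ 2 * (1 - (inner ℝ h e) ^ 2) - 2 * α * β * (∑ z ∈ Z, (2 * (inner ℝ z e) ^ 2 - 1))
      + (∑ z ∈ Z, (2 * (inner ℝ z e) ^ 2 - 1)) - (∑ z ∈ Z, (2 * (inner ℝ z e) ^ 2 - 1)) ^ 2 := by
  have a := quad_bound e Z hu hp h0 h2
  have b := psd_proj e he (insert h Z)
    (fun z => if z = h then α else 2 * √((inner ℝ z e) ^ 2 - 1 / 2))
  rw [Finset.sum_insert hZ, Finset.sum_insert hZ] at b
  have hne : ∀ z ∈ Z, z ≠ h := fun z hz hzh => hZ (hzh ▸ hz)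
  have c1 : ∑ w ∈ Z, (if h = h then α else 2 * √((inner ℝ h e) ^ 2 - 1 / 2)) *
      (if w = h then α else 2 * √((inner ℝ w e) ^ 2 - 1 / 2)) *
      (inner ℝ h w - inner ℝ h e * inner ℝ w e)
      ≤ - α * β * (∑ z ∈ Z, (2 * (inner ℝ z e) ^ 2 - 1)) := by
    rw [Finset.mul_sum]
    refine Finset.sum_le_sum fun w hw => ?_
    rw [if_pos rfl, if_neg (hne w hw)]
    have q2 := Real.sq_sqrt (show 0 ≤ (inner ℝ w e) ^ 2 - 1 / 2 by linarith [h2 w hw])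
    have hr2 := Real.sqrt_nonneg ((inner ℝ w e) ^ 2 - 1 / 2)
    have hb := hβ w hw
    have hi := hhZ w hw
    set r := √((inner ℝ w e) ^ 2 - 1 / 2)
    have e1 : 2 * (inner ℝ w e) ^ 2 - 1 = 2 * r ^ 2 := by linarith
    rw [e1]
    have := mul_le_mul_of_nonneg_left
      (show inner ℝ h w - inner ℝ h e * inner ℝ w e ≤ - (β * r) by linarith)
      (show 0 ≤ 2 * (α * r) by positivity)
    nlinarith
  have c2 : ∑ z ∈ Z, ∑ w ∈ insert h Z, (if z = h then α else 2 * √((inner ℝ z e) ^ 2 - 1 / 2)) *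
      (if w = h then α else 2 * √((inner ℝ w e) ^ 2 - 1 / 2)) *
      (inner ℝ z w - inner ℝ z e * inner ℝ w e)
      = (∑ w ∈ Z, (if h = h then α else 2 * √((inner ℝ h e) ^ 2 - 1 / 2)) *
      (if w = h then α else 2 * √((inner ℝ w e) ^ 2 - 1 / 2)) *
      (inner ℝ h w - inner ℝ h e * inner ℝ w e)) +
      ∑ z ∈ Z, ∑ w ∈ Z, (2 * √((inner ℝ z e) ^ 2 - 1 / 2)) * (2 * √((inner ℝ w e) ^ 2 - 1 / 2)) *
      (inner ℝ z w - inner ℝ z e * inner ℝ w e) := by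
    rw [← Finset.sum_add_distrib]
    refine Finset.sum_congr rfl fun z hz => ?_
    rw [Finset.sum_insert hZ]
    congr 1
    · rw [real_inner_comm z h]; ring
    · refine Finset.sum_congr rfl fun w hw => ?_
      rw [if_neg (hne z hz), if_neg (hne w hw)]
  rw [c2, if_pos rfl, real_inner_self_eq_norm_sq, hh] at b
  rw [if_pos rfl] at c1
  nlinarith

lemma beta_bound (s x y : ℝ) (hy0 : 0 ≤ y) (hy : 1 / 2 ≤ y ^ 2) (hyx : y ≤ x) (hxs : x ≤ s)
    (hx : 1 / 2 < x ^ 2) :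
    (s * x - 1 / 2) / √(x ^ 2 - 1 / 2) * √(y ^ 2 - 1 / 2) ≤ s * y - 1 / 2 := by
  have hW : 0 < √(x ^ 2 - 1 / 2) := Real.sqrt_pos.2 (by linarith)
  have qW := Real.sq_sqrt (show 0 ≤ x ^ 2 - 1 / 2 by linarith)
  have qw := Real.sq_sqrt (show 0 ≤ y ^ 2 - 1 / 2 by linarith)
  set W := √(x ^ 2 - 1 / 2)
  set w := √(y ^ 2 - 1 / 2)
  rw [div_mul_eq_mul_div, div_le_iff₀ hW]
  have hsy : 0 ≤ s * y - 1 / 2 := by nlinarith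
  refine abs_le_of_sq_le_sq' ?_ (by positivity) |>.2
  have e1 : ((s * x - 1 / 2) * w) ^ 2 = (s * x - 1 / 2) ^ 2 * (y ^ 2 - 1 / 2) := by
    rw [mul_pow, qw]
  have e2 : ((s * y - 1 / 2) * W) ^ 2 = (s * y - 1 / 2) ^ 2 * (x ^ 2 - 1 / 2) := by
    rw [mul_pow, qW]
  rw [e1, e2]
  have f1 : 0 ≤ (s - x) * ((s + x) * (x + y) / 2 - x * y - 1 / 2) := by
    apply mul_nonneg (by linarith)
    nlinarith [mul_nonneg (sub_nonneg.2 hxs) (by linarith : 0 ≤ x + y)]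
  have f2 : 0 ≤ (x - y) * (x ^ 2 / 2 - 1 / 4) := by
    apply mul_nonneg <;> linarith
  have f3 : 0 ≤ s ^ 2 * (x + y) / 2 - s * x * y - s / 2 + (x + y) / 4 := by nlinarith
  have f4 := mul_nonneg (sub_nonneg.2 hyx) f3
  nlinarith

/-- Bound on the total weight of the other points in presence of a high point. -/
lemma T_high (e : E3) (he : ‖e‖ = 1) (Z : Finset E3) (hu : ∀ z ∈ Z, ‖z‖ = 1)
    (hp : ∀ z ∈ Z, ∀ w ∈ Z, z ≠ w → inner ℝ z w ≤ 1 / 2)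
    (h0 : ∀ z ∈ Z, 0 ≤ inner ℝ z e) (h2 : ∀ z ∈ Z, 1 / 2 ≤ (inner ℝ z e) ^ 2)
    (h : E3) (hh : ‖h‖ = 1) (hZ : h ∉ Z) (hhZ : ∀ z ∈ Z, inner ℝ h z ≤ 1 / 2)
    (x : ℝ) (hx0 : 0 ≤ x) (hx : 1 / 2 ≤ x ^ 2) (hxs : x ≤ inner ℝ h e) (hs1 : inner ℝ h e < (1 : ℝ))
    (hxeq : (inner ℝ h e) ^ 2 + x ^ 2 - inner ℝ h e * x = 3 / 4)
    (hle : ∀ z ∈ Z, inner ℝ z e ≤ x) :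
    ∑ z ∈ Z, (2 * (inner ℝ z e) ^ 2 - 1) ≤ 2 * x ^ 2 - 1 := by
  rcases hx.eq_or_lt with hx' | hx'
  · rw [← hx', show (2 * (1 / 2) - 1 : ℝ) = 0 by norm_num]
    apply Finset.sum_nonpos
    intro z hz
    have := h0 z hz
    have := hle z hz
    nlinarith
  set s : ℝ := inner ℝ h e with hs
  set T := ∑ z ∈ Z, (2 * (inner ℝ z e) ^ 2 - 1) with hT
  have hT0 : 0 ≤ T := Finset.sum_nonneg fun z hz => by linarith [h2 z hz]
  have hW : 0 < √(x ^ 2 - 1 / 2) := Real.sqrt_pos.2 (by linarith)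
  have qW := Real.sq_sqrt (show 0 ≤ x ^ 2 - 1 / 2 by linarith)
  set β := (s * x - 1 / 2) / √(x ^ 2 - 1 / 2) with hβ
  have hs2 : 0 < 1 - s ^ 2 := by nlinarith
  have hβ0 : 0 ≤ β := div_nonneg (by nlinarith) hW.le
  have key := high_bound e he Z hu hp h0 h2 h hh hZ hhZ (β * T / (1 - s ^ 2)) β (by positivity)
    (fun z hz => beta_bound s x _ (h0 z hz) (h2 z hz) (hle z hz) hxs hx')
  rw [← hs, ← hT] at key
  have hβ2 : β ^ 2 = (1 - s ^ 2) * (1 - x ^ 2) / (x ^ 2 - 1 / 2) := by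
    rw [hβ, div_pow, qW]
    congr 1
    nlinarith
  have e1 : (β * T / (1 - s ^ 2)) ^ 2 * (1 - s ^ 2) - 2 * (β * T / (1 - s ^ 2)) * β * T
      = - (β ^ 2 / (1 - s ^ 2)) * T ^ 2 := by
    field_simp; ring
  have e2 : β ^ 2 / (1 - s ^ 2) = (1 - x ^ 2) / (x ^ 2 - 1 / 2) := by
    rw [hβ2]; field_simp
  rw [e1, e2] at key
  have hX : 0 < x ^ 2 - 1 / 2 := by linarith
  have key2 : T ^ 2 ≤ (2 * x ^ 2 - 1) * T := by
    have e3 : -((1 - x ^ 2) / (x ^ 2 - 1 / 2)) * T ^ 2 + T - T ^ 2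
        = (T * (x ^ 2 - 1 / 2) - T ^ 2 / 2) / (x ^ 2 - 1 / 2) := by
      have : 1 - x ^ 2 = 1 / 2 - (x ^ 2 - 1 / 2) := by ring
      rw [this]
      generalize x ^ 2 - 1 / 2 = u at hX
      field_simp
      ring
    rw [e3] at key
    have := (div_nonneg_iff.1 key).resolve_right (by intro h; linarith [h.2])
    linarith [this.1]
  by_contra hcon
  push Not at hcon
  nlinarith

lemma rho_sum (e : E3) (Z : Finset E3) (x : ℝ) (hx : x ^ 2 ≤ 3 / 4) (hx2 : 1 / 2 ≤ x ^ 2)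
    (h0 : ∀ z ∈ Z, 0 ≤ inner ℝ z e) (h2 : ∀ z ∈ Z, 1 / 2 ≤ (inner ℝ z e) ^ 2)
    (hle : ∀ z ∈ Z, (inner ℝ z e) ^ 2 ≤ x ^ 2) :
    ∑ z ∈ Z, kf (- inner ℝ z e) ≤ 2581 / 1000 * ((1 - 7 / 4 * (3 / 4 - x ^ 2)) *
      ∑ z ∈ Z, (2 * (inner ℝ z e) ^ 2 - 1)) := by
  rw [Finset.mul_sum, Finset.mul_sum]
  refine Finset.sum_le_sum fun z hz => ?_
  have a0 := h0 z hz
  have a2 := h2 z hz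
  have a3 := hle z hz
  set s : ℝ := inner ℝ z e
  have := kf_p2 s (by nlinarith) (by nlinarith)
  have m : (2 * s ^ 2 - 1) * (1 - 7 / 4 * (3 / 4 - s ^ 2)) ≤
      (1 - 7 / 4 * (3 / 4 - x ^ 2)) * (2 * s ^ 2 - 1) := by
    rw [mul_comm]
    apply mul_le_mul_of_nonneg_right <;> linarith
  linarith

lemma gram_bound (e h z : E3) (he : ‖e‖ = 1) (hh : ‖h‖ = 1) (hz : ‖z‖ = 1)
    (s0 : 0 ≤ inner ℝ h e) (t0 : 0 ≤ inner ℝ z e) (s2 : 1 / 2 ≤ (inner ℝ h e) ^ 2)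
    (t2 : 1 / 2 ≤ (inner ℝ z e) ^ 2) (hi : inner ℝ h z ≤ 1 / 2) :
    (1 / 2 - inner ℝ h e * inner ℝ z e) ^ 2
      ≤ (1 - (inner ℝ h e) ^ 2) * (1 - (inner ℝ z e) ^ 2) := by
  set s : ℝ := inner ℝ h e with hs
  set t : ℝ := inner ℝ z e with ht
  have hee : inner ℝ e e = (1 : ℝ) := by rw [real_inner_self_eq_norm_sq, he]; norm_num
  have a1 : inner ℝ (h - s • e) (z - t • e) = inner ℝ h z - s * t := by
    rw [inner_sub_left, inner_sub_right, inner_sub_right, real_inner_smul_left,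
      real_inner_smul_right, real_inner_smul_right, real_inner_smul_left, hee,
      real_inner_comm z e, ← hs, ← ht]
    ring
  have a2 : ∀ w : E3, ‖w‖ = 1 → ‖w - (inner ℝ w e : ℝ) • e‖ ^ 2 = 1 - (inner ℝ w e) ^ 2 := by
    intro w hw
    rw [norm_sub_sq_real, hw, norm_smul, he, real_inner_smul_right, mul_one, Real.norm_eq_abs,
      sq_abs]
    ring
  have a3 := abs_real_inner_le_norm (h - s • e) (z - t • e)
  have a4 := pow_le_pow_left₀ (abs_nonneg _) a3 2
  rw [sq_abs, mul_pow, a2 h hh, a2 z hz, a1] at a4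
  have hst := pair_bound s t s0 t0 s2 t2
  have hst' : 0 ≤ s * t - 1 / 2 := le_trans (by positivity) hst
  refine le_trans ?_ a4
  nlinarith

set_option maxHeartbeats 1000000 in
/-- Main local estimate. -/
lemma local_pos (e : E3) (he : ‖e‖ = 1) (Z : Finset E3) (hu : ∀ z ∈ Z, ‖z‖ = 1)
    (hp : ∀ z ∈ Z, ∀ w ∈ Z, z ≠ w → inner ℝ z w ≤ 1 / 2)
    (h0 : ∀ z ∈ Z, 0 ≤ inner ℝ z e) (h2 : ∀ z ∈ Z, 1 / 2 ≤ (inner ℝ z e) ^ 2) :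
    ∑ z ∈ Z, kf (- inner ℝ z e) ≤ 2581 / 1000 := by
  by_cases hex : ∃ h ∈ Z, 3 / 4 < (inner ℝ h e) ^ 2
  swap
  · push Not at hex
    have h34 : (√(3 / 4 : ℝ)) ^ 2 = 3 / 4 := Real.sq_sqrt (by norm_num)
    have := rho_sum e Z √(3 / 4) h34.le (by rw [h34]; norm_num) h0 h2
      (fun z hz => by rw [h34]; exact hex z hz)
    rw [h34] at this
    have := T_le_one e he Z hu hp h0 h2
    linarith
  obtain ⟨h, hZ', hh34⟩ := hex
  have hh := hu h hZ'
  set Y := Z.erase h with hY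
  have hsub : ∀ z ∈ Y, z ∈ Z := fun z hz => Finset.mem_of_mem_erase hz
  have hneY : ∀ z ∈ Y, z ≠ h := fun z hz => Finset.ne_of_mem_erase hz
  have hsum : ∑ z ∈ Z, kf (- inner ℝ z e) = kf (- inner ℝ h e) + ∑ z ∈ Y, kf (- inner ℝ z e) :=
    (Finset.add_sum_erase Z _ hZ').symm
  have hle1 : ∀ z ∈ Z, inner ℝ z e ≤ (1 : ℝ) := fun z hz => by
    have := real_inner_le_norm z e
    rwa [hu z hz, he, mul_one] at this
  set s : ℝ := inner ℝ h e with hs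
  have hs0 : 0 ≤ s := h0 h hZ'
  have hs1 : s ≤ 1 := hle1 h hZ'
  set x := s / 2 + √(3 / 4 * (1 - s ^ 2)) with hx
  have hr := Real.sq_sqrt (show 0 ≤ 3 / 4 * (1 - s ^ 2) by nlinarith)
  have hr0 := Real.sqrt_nonneg (3 / 4 * (1 - s ^ 2))
  have hxeq : s ^ 2 + x ^ 2 - s * x = 3 / 4 := by
    rw [hx]; nlinarith
  have hxs : x ≤ s := by
    have : √(3 / 4 * (1 - s ^ 2)) ≤ s / 2 := Real.sqrt_le_iff.2 ⟨by linarith, by nlinarith⟩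
    linarith
  have hx0 : 0 ≤ x := by positivity
  have hle : ∀ z ∈ Y, inner ℝ z e ≤ x := by
    intro z hz
    have hd := gram_bound e h z he hh (hu z (hsub z hz)) (h0 h hZ') (h0 z (hsub z hz))
      (h2 h hZ') (h2 z (hsub z hz)) (hp h hZ' z (hsub z hz) (hneY z hz).symm)
    rw [← hs] at hd
    set t : ℝ := inner ℝ z e
    have hq : (t - s / 2) ^ 2 ≤ 3 / 4 * (1 - s ^ 2) := by nlinarith
    have := Real.abs_le_sqrt hq
    have := le_abs_self (t - s / 2)
    linarith
  by_cases hx2 : x ^ 2 < 1 / 2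
  · have : Y = ∅ := by
      apply Finset.eq_empty_of_forall_notMem
      intro z hz
      have z0 := h0 z (hsub z hz)
      have z2 := h2 z (hsub z hz)
      have := hle z hz
      nlinarith
    rw [hsum, this, Finset.sum_empty, add_zero]
    have := kf_p4 s (by nlinarith) (by linarith)
    linarith
  push Not at hx2
  have hx34 : x ^ 2 ≤ 3 / 4 := by nlinarith
  have hxlo : 7071 / 10000 ≤ x := by nlinarith
  have hxhi : x ≤ 8661 / 10000 := by nlinarith
  have hs967 : s ≤ 967 / 1000 := by
    by_contra hcon
    push Not at hcon
    nlinarith [mul_nonneg (sub_nonneg.2 hxlo) (show 0 ≤ x + 7071 / 10000 - s by linarith)]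
  have hT := T_high e he Y (fun z hz => hu z (hsub z hz))
    (fun z hz w hw => hp z (hsub z hz) w (hsub w hw)) (fun z hz => h0 z (hsub z hz))
    (fun z hz => h2 z (hsub z hz)) h hh (Finset.notMem_erase h Z)
    (fun z hz => hp h hZ' z (hsub z hz) (hneY z hz).symm) x hx0 hx2 hxs
    (by rw [← hs]; linarith) hxeq hle
  have hS := rho_sum e Y x hx34 hx2 (fun z hz => h0 z (hsub z hz))
    (fun z hz => h2 z (hsub z hz))
    (fun z hz => pow_le_pow_left₀ (h0 z (hsub z hz)) (hle z hz) 2)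
  have hk := kf_p3 s (by nlinarith) hs967
  have hρ := mul_le_mul_of_nonneg_left hT (show 0 ≤ 1 - 7 / 4 * (3 / 4 - x ^ 2) by linarith)
  have h5 := kf_p5 x hxlo hxhi
  rw [hsum]
  set E := (2 * x ^ 2 - 1) * (1 - 7 / 4 * (3 / 4 - x ^ 2)) with hE
  have hE1 : E ≤ 1 := by rw [hE]; nlinarith
  set R := (49 / 100 - E) / (51 / 10) + 87 / 100 with hR
  have hR0 : 0 < R := by rw [hR]; linarith
  have hsR : s ≤ R := by
    by_contra hcon
    push Not at hcon
    have := mul_pos (sub_pos.2 hcon) (show 0 < s + R - x by linarith)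
    nlinarith
  have : 51 / 10 * (s - 87 / 100) ≤ 49 / 100 - E := by rw [hR] at hsR; linarith
  have hρ' : (1 - 7 / 4 * (3 / 4 - x ^ 2)) * ∑ z ∈ Y, (2 * (inner ℝ z e) ^ 2 - 1) ≤ E := by
    rw [hE]; linarith
  linarith

lemma local_bound (x : E3) (hx : ‖x‖ = 1) (Y : Finset E3) (hu : ∀ z ∈ Y, ‖z‖ = 1)
    (hp : ∀ z ∈ Y, ∀ w ∈ Y, z ≠ w → inner ℝ z w ≤ (1 / 2 : ℝ))
    (hxY : ∀ z ∈ Y, inner ℝ x z ≤ (1 / 2 : ℝ)) :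
    ∑ y ∈ Y, kf (inner ℝ x y) ≤ 2581 / 1000 := by
  set Z := Y.filter (fun y => inner ℝ x y < 0 ∧ 1 / 2 ≤ (inner ℝ x y) ^ 2) with hZ
  have hin : ∀ z, inner ℝ z (-x) = - inner ℝ x z := fun z => by
    rw [inner_neg_right, real_inner_comm]
  have h1 : ∑ y ∈ Y, kf (inner ℝ x y) ≤ ∑ y ∈ Z, kf (inner ℝ x y) := by
    rw [← Finset.sum_filter_add_sum_filter_not Y
      (fun y => inner ℝ x y < 0 ∧ 1 / 2 ≤ (inner ℝ x y) ^ 2), ← hZ]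
    have : ∑ y ∈ Y.filter (fun y => ¬ (inner ℝ x y < 0 ∧ 1 / 2 ≤ (inner ℝ x y) ^ 2)),
        kf (inner ℝ x y) ≤ 0 := by
      apply Finset.sum_nonpos
      intro y hy
      rw [Finset.mem_filter] at hy
      have hy1 := hxY y hy.1
      have hy2 := hy.2
      set t : ℝ := inner ℝ x y
      have := kf_p1 t (by
        by_contra hc
        push Not at hc
        exact hy2 ⟨by linarith, by nlinarith⟩) hy1
      linarith
    linarith
  refine h1.trans ?_
  have := local_pos (-x) (by rw [norm_neg, hx]) Z
    (fun z hz => hu z (Finset.mem_of_mem_filter z hz))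
    (fun z hz w hw => hp z (Finset.mem_of_mem_filter z hz) w (Finset.mem_of_mem_filter w hw))
    (fun z hz => by rw [hin]; linarith [(Finset.mem_filter.1 hz).2.1])
    (fun z hz => by rw [hin, neg_sq]; exact (Finset.mem_filter.1 hz).2.2)
  simpa only [hin, neg_neg] using this

/-- The kissing number of balls in three dimensions is at most twelve. -/
theorem kissing (X : Finset E3) (hu : ∀ z ∈ X, ‖z‖ = 1)
    (hp : ∀ z ∈ X, ∀ w ∈ X, z ≠ w → inner ℝ z w ≤ (1 / 2 : ℝ)) : X.card ≤ 12 := by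
  have g1 := leg_psd_1 X hu
  have g2 := leg_psd_2 X hu
  have g3 := leg_psd_3 X hu
  have g4 := leg_psd_4 X hu
  have g9 := leg_psd_9 X hu
  have hsplit : ∑ x ∈ X, ∑ y ∈ X, kf (inner ℝ x y) = (X.card : ℝ) ^ 2
      + 17570/10000 * (∑ x ∈ X, ∑ y ∈ X, (inner ℝ x y))
      + 35088/10000 * (∑ x ∈ X, ∑ y ∈ X, ((3 * (inner ℝ x y) ^ 2 - 1) / 2))
      + 17022/10000 * (∑ x ∈ X, ∑ y ∈ X, ((5 * (inner ℝ x y) ^ 3 - 3 * (inner ℝ x y)) / 2))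
      + 19826/10000 * (∑ x ∈ X, ∑ y ∈ X,
        ((35 * (inner ℝ x y) ^ 4 - 30 * (inner ℝ x y) ^ 2 + 3) / 8))
      + 4597/10000 * (∑ x ∈ X, ∑ y ∈ X, ((12155 * (inner ℝ x y) ^ 9 - 25740 * (inner ℝ x y) ^ 7
        + 18018 * (inner ℝ x y) ^ 5 - 4620 * (inner ℝ x y) ^ 3 + 315 * (inner ℝ x y)) / 128)) := by
    have : (X.card : ℝ) ^ 2 = ∑ x ∈ X, ∑ y ∈ X, (1 : ℝ) := by
      simp [sq]
    rw [this]
    simp only [Finset.mul_sum, ← Finset.sum_add_distrib]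
    rfl
  have hup : ∑ x ∈ X, ∑ y ∈ X, kf (inner ℝ x y) ≤ ∑ x ∈ X, (12992 / 1000 : ℝ) := by
    refine Finset.sum_le_sum fun x hx => ?_
    rw [← Finset.add_sum_erase X _ hx]
    have := local_bound x (hu x hx) (X.erase x) (fun z hz => hu z (Finset.mem_of_mem_erase hz))
      (fun z hz w hw => hp z (Finset.mem_of_mem_erase hz) w (Finset.mem_of_mem_erase hw))
      (fun z hz => hp x hx z (Finset.mem_of_mem_erase hz) (Finset.ne_of_mem_erase hz).symm)
    have h1 : kf (inner ℝ x x) ≤ 10411 / 1000 := by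
      rw [real_inner_self_eq_norm_sq, hu x hx, kf]; norm_num
    linarith
  rw [Finset.sum_const, nsmul_eq_mul] at hup
  have hlow : (X.card : ℝ) ^ 2 ≤ X.card * (12992 / 1000) := by
    refine le_trans ?_ hup
    rw [hsplit]
    linarith
  by_contra hc
  push Not at hc
  have : (13 : ℝ) ≤ X.card := by exact_mod_cast hc
  nlinarith


section Rotations
open MeasureTheory

/-- The orthogonal group. -/
abbrev O3 := unitary (E3 →L[ℝ] E3)

instance e3_cont_star : ContinuousStar (E3 →L[ℝ] E3) :=
  ⟨(ContinuousLinearMap.adjoint (𝕜 := ℝ) (E := E3) (F := E3)).continuous⟩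

instance o3_compact : CompactSpace O3 := by
  have hb : Bornology.IsBounded ((unitary (E3 →L[ℝ] E3) : Set (E3 →L[ℝ] E3))) := by
    rw [isBounded_iff_forall_norm_le]
    refine ⟨1, fun g hg => ?_⟩
    refine ContinuousLinearMap.opNorm_le_bound _ zero_le_one fun x => ?_
    rw [one_mul]
    exact (Unitary.norm_map ⟨g, hg⟩ x).le
  have : IsCompact ((unitary (E3 →L[ℝ] E3) : Set (E3 →L[ℝ] E3))) :=
    Metric.isCompact_of_isClosed_isBounded isClosed_unitary hb
  exact isCompact_iff_compactSpace.1 this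

instance o3_borel : BorelSpace O3 := Subtype.borelSpace _

lemma o3_trans (v w : E3) (h : ‖v‖ = ‖w‖) : ∃ g : O3, (g : E3 →L[ℝ] E3) v = w :=
  ⟨Unitary.linearIsometryEquiv.symm ((Submodule.span ℝ {v - w})ᗮ.reflection), by
    simpa using Submodule.reflection_sub h⟩

lemma o3_inv_apply (g : O3) (q : E3) :
    ((g⁻¹ : O3) : E3 →L[ℝ] E3) ((g : E3 →L[ℝ] E3) q) = q := by
  have : ((g⁻¹ * g : O3) : E3 →L[ℝ] E3) q = q := by rw [inv_mul_cancel]; rfl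
  exact this

lemma o3_cont : Continuous (fun p : O3 × E3 => ((p.1⁻¹ : O3) : E3 →L[ℝ] E3) p.2) := by
  have h1 : Continuous (fun p : O3 × E3 => ((p.1⁻¹ : O3) : E3 →L[ℝ] E3)) :=
    continuous_subtype_val.comp (continuous_inv.comp continuous_fst)
  exact h1.clm_apply continuous_snd

/-- Averaging over rotations. -/
lemma rot_avg (C S : Set E3) (hC : IsClosed C) (hcone : ∀ r : ℝ, 0 < r → ∀ q ∈ C, r • q ∈ C)
    (hS : MeasurableSet S) (hS0 : ∀ q ∈ S, q ≠ 0)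
    (hSrot : ∀ q q' : E3, ‖q‖ = ‖q'‖ → q ∈ S → q' ∈ S) (v : Fin 12 → E3) (hv : ∀ k, ‖v k‖ = 1)
    (d : ℕ)
    (hd : ∀ g : O3, (Finset.univ.filter (fun k => (g : E3 →L[ℝ] E3) (v k) ∈ C)).card ≤ d) :
    12 * volume (C ∩ S) ≤ d * volume S := by
  set μ : Measure O3 := Measure.haar with hμ
  set H : E3 → ENNReal := fun q => μ {g : O3 | ((g⁻¹ : O3) : E3 →L[ℝ] E3) q ∈ C} with hH
  have hmeas : ∀ q, MeasurableSet {g : O3 | ((g⁻¹ : O3) : E3 →L[ℝ] E3) q ∈ C} := fun q =>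
    (hC.preimage (o3_cont.comp (by fun_prop : Continuous fun g : O3 => (g, q)))).measurableSet
  -- rotation invariance of `H`
  have hrot : ∀ q q' : E3, ‖q‖ = ‖q'‖ → H q = H q' := by
    intro q q' hq
    obtain ⟨h, rfl⟩ := o3_trans q q' hq
    simp only [hH]
    have : {g : O3 | ((g⁻¹ : O3) : E3 →L[ℝ] E3) q ∈ C} = (fun g => h * g) ⁻¹'
        {g : O3 | ((g⁻¹ : O3) : E3 →L[ℝ] E3) ((h : E3 →L[ℝ] E3) q) ∈ C} := by
      ext g
      simp only [Set.mem_preimage, Set.mem_ofPred_eq, mul_inv_rev]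
      have : (((g⁻¹ * h⁻¹ : O3)) : E3 →L[ℝ] E3) ((h : E3 →L[ℝ] E3) q)
          = ((g⁻¹ : O3) : E3 →L[ℝ] E3) q := by
        show ((g⁻¹ : O3) : E3 →L[ℝ] E3) (((h⁻¹ : O3) : E3 →L[ℝ] E3) ((h : E3 →L[ℝ] E3) q)) = _
        rw [o3_inv_apply]
      rw [this]
    rw [this, measure_preimage_mul]
  have hscale : ∀ (r : ℝ), 0 < r → ∀ q, H (r • q) = H q := by
    intro r hr q
    simp only [hH]
    congr 1
    ext g
    simp only [Set.mem_ofPred_eq, map_smul]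
    constructor
    · intro h
      have := hcone r⁻¹ (inv_pos.2 hr) _ h
      rwa [smul_smul, inv_mul_cancel₀ hr.ne', one_smul] at this
    · exact hcone r hr _
  have hconst : ∀ q : E3, q ≠ 0 → H q = H (v 0) := by
    intro q hq
    have hq' : 0 < ‖q‖ := norm_pos_iff.2 hq
    rw [← hscale ‖q‖⁻¹ (inv_pos.2 hq') q]
    apply hrot
    rw [norm_smul, norm_inv, norm_norm, inv_mul_cancel₀ hq'.ne', hv]
  -- the average number of vectors in `C`
  have h12 : 12 * H (v 0) ≤ d * μ Set.univ := by
    have e1 : 12 * H (v 0) = ∑ k : Fin 12, H (v k) := by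
      rw [Finset.sum_congr rfl fun k _ => hrot (v k) (v 0) (by rw [hv, hv])]
      simp
    have e2 : ∑ k : Fin 12, H (v k) = ∫⁻ g : O3, ∑ k : Fin 12,
        {g : O3 | ((g⁻¹ : O3) : E3 →L[ℝ] E3) (v k) ∈ C}.indicator (1 : O3 → ENNReal) g ∂μ := by
      rw [lintegral_finsetSum]
      · refine Finset.sum_congr rfl fun k _ => ?_
        rw [lintegral_indicator_one (hmeas _)]
      · intro k _
        exact measurable_one.indicator (hmeas _)
    rw [e1, e2, ← lintegral_const]
    refine lintegral_mono fun g => ?_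
    simp only [Set.indicator_apply, Set.mem_ofPred_eq, Pi.one_apply]
    rw [Finset.sum_boole]
    exact_mod_cast hd g⁻¹
  -- Fubini
  have hcl : MeasurableSet {p : O3 × E3 | ((p.1⁻¹ : O3) : E3 →L[ℝ] E3) p.2 ∈ C} :=
    (hC.preimage o3_cont).measurableSet
  have hset : MeasurableSet
      ({p : O3 × E3 | ((p.1⁻¹ : O3) : E3 →L[ℝ] E3) p.2 ∈ C} ∩ Prod.snd ⁻¹' S) :=
    hcl.inter (measurable_snd hS)
  have f1 := Measure.prod_apply (μ := μ) (ν := (volume : Measure E3)) hset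
  have f2 := Measure.prod_apply_symm (μ := μ) (ν := (volume : Measure E3)) hset
  have g1 : ∀ g : O3, volume (Prod.mk g ⁻¹'
      ({p : O3 × E3 | ((p.1⁻¹ : O3) : E3 →L[ℝ] E3) p.2 ∈ C} ∩ Prod.snd ⁻¹' S))
      = volume (C ∩ S) := by
    intro g
    have hmp := (Unitary.linearIsometryEquiv g⁻¹).measurePreserving
    rw [← hmp.measure_preimage (hC.measurableSet.inter hS).nullMeasurableSet]
    congr 1
    ext q
    simp only [Set.mem_preimage, Set.mem_inter_iff, Set.mem_ofPred_eq]
    have hn : ‖(Unitary.linearIsometryEquiv g⁻¹) q‖ = ‖q‖ := LinearIsometryEquiv.norm_map _ _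
    constructor
    · rintro ⟨h1, h2⟩
      exact ⟨h1, hSrot _ _ hn.symm h2⟩
    · rintro ⟨h1, h2⟩
      exact ⟨h1, hSrot _ _ hn h2⟩
  have g2 : ∀ q : E3, μ ((fun g => (g, q)) ⁻¹'
      ({p : O3 × E3 | ((p.1⁻¹ : O3) : E3 →L[ℝ] E3) p.2 ∈ C} ∩ Prod.snd ⁻¹' S))
      = S.indicator (fun _ => H (v 0)) q := by
    intro q
    by_cases hq : q ∈ S
    · rw [Set.indicator_of_mem hq, ← hconst q (hS0 q hq)]
      simp only [hH]
      congr 1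
      ext g
      simp [hq]
    · rw [Set.indicator_of_notMem hq]
      convert measure_empty (μ := μ)
      ext g
      simp [hq]
  rw [lintegral_congr g1, lintegral_const] at f1
  rw [lintegral_congr g2, lintegral_indicator hS, lintegral_const,
    Measure.restrict_apply_univ] at f2
  have hfub : volume (C ∩ S) * μ Set.univ = H (v 0) * volume S := by rw [← f1, f2]
  have hfin : μ Set.univ ≠ ⊤ := measure_ne_top μ _
  have hpos : μ Set.univ ≠ 0 := by
    intro h0
    exact (NeZero.ne μ) (Measure.measure_univ_eq_zero.1 h0)
  rw [← ENNReal.mul_le_mul_iff_left hpos hfin]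
  calc 12 * volume (C ∩ S) * μ Set.univ = 12 * (volume (C ∩ S) * μ Set.univ) := by ring
    _ = (12 * H (v 0)) * volume S := by rw [hfub]; ring
    _ ≤ (d * μ Set.univ) * volume S := by gcongr
    _ = _ := by ring

end Rotations


section GrowthLW
open MeasureTheory

lemma thick_one (S : Set ℝ) (hS : IsCompact S) (hne : S.Nonempty) (a : ℝ) (ha : 0 ≤ a) :
    volume S + ENNReal.ofReal (2 * a) ≤
      volume {u : ℝ | ∃ x ∈ S, ∃ t ∈ Set.Icc (-a) a, u = x + t} := by
  set M := sSup S
  set m := sInf S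
  have hM : M ∈ S := hS.sSup_mem hne
  have hm : m ∈ S := hS.sInf_mem hne
  have hleM : ∀ x ∈ S, x ≤ M := fun x hx => le_csSup hS.bddAbove hx
  have hlem : ∀ x ∈ S, m ≤ x := fun x hx => csInf_le hS.bddBelow hx
  have hsub : S ∪ (Set.Ioc M (M + a) ∪ Set.Ico (m - a) m) ⊆
      {u : ℝ | ∃ x ∈ S, ∃ t ∈ Set.Icc (-a) a, u = x + t} := by
    rintro u (hu | hu | hu)
    · exact ⟨u, hu, 0, ⟨by linarith, ha⟩, by ring⟩
    · exact ⟨M, hM, u - M, ⟨by linarith [hu.1], by linarith [hu.2]⟩, by ring⟩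
    · exact ⟨m, hm, u - m, ⟨by linarith [hu.1], by linarith [hu.2]⟩, by ring⟩
  refine le_trans (le_of_eq ?_) (measure_mono hsub)
  have hmM : m ≤ M := hlem M hM
  rw [measure_union _ (measurableSet_Ioc.union measurableSet_Ico), measure_union _ measurableSet_Ico,
    Real.volume_Ioc, Real.volume_Ico, ← ENNReal.ofReal_add (by linarith) (by linarith)]
  · congr 2; ring
  · rw [Set.disjoint_left]
    intro u hu hu'
    linarith [hu.1, hu'.2]
  · rw [Set.disjoint_left]
    rintro u hu (hu' | hu')
    · linarith [hu'.1, hleM u hu]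
    · linarith [hu'.2, hlem u hu]

/-- Thickening in the direction of the first coordinate. -/
def thick (a : ℝ) (K : Set (ℝ × ℝ × ℝ)) : Set (ℝ × ℝ × ℝ) :=
  (fun q : ℝ × (ℝ × ℝ × ℝ) => (q.2.1 + q.1, q.2.2)) '' (Set.Icc (-a) a ×ˢ K)

lemma thick_compact (a : ℝ) (K : Set (ℝ × ℝ × ℝ)) (hK : IsCompact K) : IsCompact (thick a K) :=
  (isCompact_Icc.prod hK).image (by fun_prop)

lemma subset_thick (a : ℝ) (ha : 0 ≤ a) (K : Set (ℝ × ℝ × ℝ)) : K ⊆ thick a K := by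
  intro p hp
  exact ⟨(0, p), ⟨⟨by simpa using ha, ha⟩, hp⟩, by simp⟩

lemma thick_vol (a : ℝ) (ha : 0 ≤ a) (K : Set (ℝ × ℝ × ℝ)) (hK : IsCompact K) :
    volume K + ENNReal.ofReal (2 * a) * volume (Prod.snd '' K) ≤ volume (thick a K) := by
  have hA : MeasurableSet (Prod.snd '' K) := (hK.image continuous_snd).isClosed.measurableSet
  have e1 : volume K = ∫⁻ p : ℝ × ℝ, volume ((fun x : ℝ => (x, p)) ⁻¹' K) :=
    Measure.prod_apply_symm hK.isClosed.measurableSet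
  have e2 : volume (thick a K) = ∫⁻ p : ℝ × ℝ, volume ((fun x : ℝ => (x, p)) ⁻¹' (thick a K)) :=
    Measure.prod_apply_symm (thick_compact a K hK).isClosed.measurableSet
  have e3 : ENNReal.ofReal (2 * a) * volume (Prod.snd '' K)
      = ∫⁻ p : ℝ × ℝ, (Prod.snd '' K).indicator (fun _ => ENNReal.ofReal (2 * a)) p := by
    rw [lintegral_indicator hA, lintegral_const, Measure.restrict_apply_univ]
  rw [e1, e2, e3, ← lintegral_add_right _ (measurable_const.indicator hA)]
  refine lintegral_mono fun p => ?_
  by_cases hp : p ∈ Prod.snd '' K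
  · rw [Set.indicator_of_mem hp]
    have hS : IsCompact ((fun x : ℝ => (x, p)) ⁻¹' K) := by
      refine (hK.image continuous_fst).of_isClosed_subset
        (hK.isClosed.preimage (by fun_prop)) ?_
      intro x hx
      exact ⟨(x, p), hx, rfl⟩
    have hne : ((fun x : ℝ => (x, p)) ⁻¹' K).Nonempty := by
      obtain ⟨⟨x, q⟩, hq, rfl⟩ := hp
      exact ⟨x, hq⟩
    refine (thick_one _ hS hne a ha).trans (measure_mono ?_)
    rintro u ⟨x, hx, t, ht, rfl⟩
    exact ⟨(t, (x, p)), ⟨ht, hx⟩, rfl⟩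
  · rw [Set.indicator_of_notMem hp, add_zero]
    exact measure_mono (Set.preimage_mono (subset_thick a ha K))

lemma CS_lint {α : Type*} [MeasurableSpace α] (μ : Measure α) (f g : α → ENNReal)
    (hf : AEMeasurable f μ) (hg : AEMeasurable g μ) :
    (∫⁻ x, f x * g x ∂μ) ^ 2 ≤ (∫⁻ x, f x ^ 2 ∂μ) * ∫⁻ x, g x ^ 2 ∂μ := by
  have h := ENNReal.lintegral_mul_le_Lp_mul_Lq μ (Real.HolderConjugate.two_two) hf hg
  have h2 := pow_le_pow_left₀ (zero_le) h 2
  refine h2.trans (le_of_eq ?_)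
  rw [mul_pow, ← ENNReal.rpow_natCast, ← ENNReal.rpow_natCast, ← ENNReal.rpow_mul,
    ← ENNReal.rpow_mul]
  norm_num

/-- Three dimensional Loomis-Whitney inequality. -/
lemma loomis_whitney (K : Set (ℝ × ℝ × ℝ)) (A1 A2 A3 : Set (ℝ × ℝ))
    (hK : MeasurableSet K) (h1 : MeasurableSet A1) (h2 : MeasurableSet A2) (h3 : MeasurableSet A3)
    (k1 : ∀ x y z, (x, y, z) ∈ K → (y, z) ∈ A1)
    (k2 : ∀ x y z, (x, y, z) ∈ K → (z, x) ∈ A2)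
    (k3 : ∀ x y z, (x, y, z) ∈ K → (x, y) ∈ A3) :
    volume K ^ 2 ≤ volume A1 * volume A2 * volume A3 := by
  set g1 : ℝ × ℝ → ENNReal := A1.indicator 1 with hg1
  set g2 : ℝ × ℝ → ENNReal := A2.indicator 1 with hg2
  set g3 : ℝ × ℝ → ENNReal := A3.indicator 1 with hg3
  have m1 : Measurable g1 := measurable_one.indicator h1
  have m2 : Measurable g2 := measurable_one.indicator h2
  have m3 : Measurable g3 := measurable_one.indicator h3
  have sq1 : ∀ p, g1 p ^ 2 = g1 p := fun p => by
    by_cases h : p ∈ A1 <;> simp [hg1, h]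
  have sq2 : ∀ p, g2 p ^ 2 = g2 p := fun p => by
    by_cases h : p ∈ A2 <;> simp [hg2, h]
  have sq3 : ∀ p, g3 p ^ 2 = g3 p := fun p => by
    by_cases h : p ∈ A3 <;> simp [hg3, h]
  have i1 : ∫⁻ p, g1 p = volume A1 := lintegral_indicator_one h1
  have i2 : ∫⁻ p, g2 p = volume A2 := lintegral_indicator_one h2
  have i3 : ∫⁻ p, g3 p = volume A3 := lintegral_indicator_one h3
  have hV : volume K ≤ ∫⁻ p : ℝ × ℝ, g3 p * ∫⁻ z : ℝ, g1 (p.2, z) * g2 (z, p.1) := by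
    have e1 : volume K = ∫⁻ q : ℝ × ℝ × ℝ, K.indicator 1 q := (lintegral_indicator_one hK).symm
    have e2 : ∫⁻ q : ℝ × ℝ × ℝ, K.indicator (1 : ℝ × ℝ × ℝ → ENNReal) q
        ≤ ∫⁻ q : ℝ × ℝ × ℝ, g3 (q.1, q.2.1) * (g1 q.2 * g2 (q.2.2, q.1)) := by
      refine lintegral_mono fun q => ?_
      obtain ⟨x, y, z⟩ := q
      by_cases h : (x, y, z) ∈ K
      · simp [h, hg1, hg2, hg3, k1 x y z h, k2 x y z h, k3 x y z h]
      · simp [h]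
    rw [e1]
    refine e2.trans (le_of_eq ?_)
    have mm : Measurable (fun q : ℝ × ℝ × ℝ => g3 (q.1, q.2.1) * (g1 q.2 * g2 (q.2.2, q.1))) := by
      fun_prop
    have e3 := lintegral_prod (μ := (volume : Measure ℝ)) (ν := (volume : Measure (ℝ × ℝ))) _
      mm.aemeasurable
    rw [Measure.volume_eq_prod ℝ (ℝ × ℝ), e3]
    have mm2 : Measurable (fun p : ℝ × ℝ => g3 p * ∫⁻ z : ℝ, g1 (p.2, z) * g2 (z, p.1)) := by
      refine m3.mul ?_
      apply Measurable.lintegral_prod_right' (f := fun w : (ℝ × ℝ) × ℝ => g1 (w.1.2, w.2) * g2 (w.2, w.1.1))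
      fun_prop
    rw [Measure.volume_eq_prod ℝ ℝ, lintegral_prod _ mm2.aemeasurable]
    refine lintegral_congr fun x => ?_
    have mm3 : Measurable (fun q : ℝ × ℝ => g3 (x, q.1) * (g1 q * g2 (q.2, x))) := by
      fun_prop
    rw [lintegral_prod _ mm3.aemeasurable]
    refine lintegral_congr fun y => ?_
    rw [← lintegral_const_mul]
    fun_prop
  have hin : ∀ p : ℝ × ℝ, (∫⁻ z : ℝ, g1 (p.2, z) * g2 (z, p.1)) ^ 2
      ≤ (∫⁻ z : ℝ, g2 (z, p.1)) * (∫⁻ z : ℝ, g1 (p.2, z)) := by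
    intro p
    have := CS_lint (volume : Measure ℝ) (fun z => g1 (p.2, z)) (fun z => g2 (z, p.1))
      (by fun_prop) (by fun_prop)
    simp only [sq1, sq2] at this
    rwa [mul_comm (∫⁻ z : ℝ, g2 (z, p.1))]
  have mG : Measurable (fun p : ℝ × ℝ => ∫⁻ z : ℝ, g1 (p.2, z) * g2 (z, p.1)) := by
    apply Measurable.lintegral_prod_right' (f := fun w : (ℝ × ℝ) × ℝ => g1 (w.1.2, w.2) * g2 (w.2, w.1.1))
    fun_prop
  have hcs := CS_lint (volume : Measure (ℝ × ℝ)) g3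
    (fun p => ∫⁻ z : ℝ, g1 (p.2, z) * g2 (z, p.1)) m3.aemeasurable mG.aemeasurable
  simp only [sq3] at hcs
  rw [i3] at hcs
  have mA : Measurable (fun x : ℝ => ∫⁻ z : ℝ, g2 (z, x)) :=
    Measurable.lintegral_prod_left' (f := g2) m2
  have mB : Measurable (fun y : ℝ => ∫⁻ z : ℝ, g1 (y, z)) :=
    Measurable.lintegral_prod_right' (f := g1) m1
  have hfin : ∫⁻ p : ℝ × ℝ, (∫⁻ z : ℝ, g1 (p.2, z) * g2 (z, p.1)) ^ 2
      ≤ volume A2 * volume A1 := by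
    refine (lintegral_mono hin).trans (le_of_eq ?_)
    rw [Measure.volume_eq_prod ℝ ℝ,
      lintegral_prod_mul (f := fun x : ℝ => ∫⁻ z : ℝ, g2 (z, x))
        (g := fun y : ℝ => ∫⁻ z : ℝ, g1 (y, z)) mA.aemeasurable mB.aemeasurable]
    congr 1
    · rw [← Measure.volume_eq_prod ℝ ℝ, ← i2, Measure.volume_eq_prod ℝ ℝ, lintegral_prod_symm _ m2.aemeasurable]
    · rw [← Measure.volume_eq_prod ℝ ℝ, ← i1, Measure.volume_eq_prod ℝ ℝ, lintegral_prod _ m1.aemeasurable]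
  calc volume K ^ 2 ≤ _ := pow_le_pow_left₀ (zero_le) hV 2
    _ ≤ _ := hcs
    _ ≤ volume A3 * (volume A2 * volume A1) := by gcongr
    _ = _ := by ring

/-- Cyclic permutation of the coordinates. -/
def cyc (q : ℝ × ℝ × ℝ) : ℝ × ℝ × ℝ := (q.2.1, q.2.2, q.1)

lemma cyc_cont : Continuous cyc := by unfold cyc; fun_prop

lemma cyc_vol (K : Set (ℝ × ℝ × ℝ)) (hK : IsCompact K) : volume (cyc '' K) = volume K := by
  have h1 : MeasurePreserving (MeasurableEquiv.prodAssoc : (ℝ × ℝ) × ℝ ≃ᵐ ℝ × ℝ × ℝ)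
    volume volume := measurePreserving_prodAssoc volume volume volume
  have h2 : MeasurePreserving (Prod.swap : ℝ × ℝ × ℝ → (ℝ × ℝ) × ℝ) volume volume :=
    Measure.measurePreserving_swap
  have h3 := h1.comp h2
  have hc : cyc = MeasurableEquiv.prodAssoc ∘ (Prod.swap : ℝ × ℝ × ℝ → (ℝ × ℝ) × ℝ) := by
    funext q; rfl
  rw [← hc] at h3
  have hinj : Function.Injective cyc := by
    rintro ⟨x, y, z⟩ ⟨x', y', z'⟩ h
    simp only [cyc, Prod.mk.injEq] at h ⊢
    tauto
  rw [← h3.measure_preimage (hK.image cyc_cont).isClosed.measurableSet.nullMeasurableSet,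
    Set.preimage_image_eq _ hinj]

lemma amgm3 (V A B C : ℝ) (hV : 0 ≤ V) (hA : 0 ≤ A) (hB : 0 ≤ B) (hC : 0 ≤ C)
    (h : V ^ 2 ≤ A * B * C) : 3 * V ^ ((2 : ℝ) / 3) ≤ A + B + C := by
  have e : (V ^ ((2 : ℝ) / 3)) ^ 3 = V ^ 2 := by
    rw [← Real.rpow_natCast, ← Real.rpow_mul hV, ← Real.rpow_natCast]; norm_num
  set u := V ^ ((2 : ℝ) / 3)
  refine le_of_pow_le_pow_left₀ (n := 3) (by norm_num) (by positivity) ?_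
  have : (3 * u) ^ 3 = 27 * V ^ 2 := by rw [← e]; ring
  rw [this]
  nlinarith [mul_nonneg hA (sq_nonneg (B - C)), mul_nonneg hB (sq_nonneg (A - C)),
    mul_nonneg hC (sq_nonneg (A - B)), mul_nonneg hA (sq_nonneg (A - C)),
    mul_nonneg hA (sq_nonneg (A - B)), mul_nonneg hB (sq_nonneg (A - B)),
    mul_nonneg hB (sq_nonneg (B - C)), mul_nonneg hC (sq_nonneg (A - C)),
    mul_nonneg hC (sq_nonneg (B - C))]

/-- Growth of the volume under addition of a cube. -/
lemma cube_growth (a : ℝ) (ha : 0 ≤ a) (K L : Set (ℝ × ℝ × ℝ)) (hK : IsCompact K)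
    (hL : volume L ≠ ⊤)
    (hsub : ∀ x y z, (x, y, z) ∈ K → ∀ r ∈ Set.Icc (-a) a, ∀ s ∈ Set.Icc (-a) a,
      ∀ t ∈ Set.Icc (-a) a, (x + r, y + s, z + t) ∈ L) :
    (volume K).toReal + 6 * a * (volume K).toReal ^ ((2 : ℝ) / 3) ≤ (volume L).toReal := by
  set K1 := thick a K with hK1
  set K2 := thick a (cyc '' K1) with hK2
  set K3 := thick a (cyc '' K2) with hK3
  have c1 : IsCompact K1 := thick_compact a K hK
  have c1' := c1.image cyc_cont
  have c2 : IsCompact K2 := thick_compact a _ c1'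
  have c2' := c2.image cyc_cont
  have c3 : IsCompact K3 := thick_compact a _ c2'
  have v1 := thick_vol a ha K hK
  have v2 := thick_vol a ha _ c1'
  have v3 := thick_vol a ha _ c2'
  rw [cyc_vol _ c1] at v2
  rw [cyc_vol _ c2] at v3
  have hL3 : volume K3 ≤ volume L := by
    rw [← cyc_vol _ c3]
    apply measure_mono
    rintro _ ⟨_, ⟨⟨t, _⟩, ⟨ht, ⟨_, ⟨⟨s, _⟩, ⟨hs, ⟨_, ⟨⟨r, x, y, z⟩, ⟨hr, hk⟩, rfl⟩, rfl⟩⟩, rfl⟩,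
      rfl⟩⟩, rfl⟩, rfl⟩
    exact hsub x y z hk r hr s hs t ht
  set A1 := Prod.snd '' K with hA1
  set A2 := Prod.snd '' (cyc '' K1) with hA2
  set A3 := Prod.snd '' (cyc '' K2) with hA3
  have d1 : IsCompact A1 := hK.image continuous_snd
  have d2 : IsCompact A2 := c1'.image continuous_snd
  have d3 : IsCompact A3 := c2'.image continuous_snd
  have lw := loomis_whitney K A1 A2 A3 hK.isClosed.measurableSet d1.isClosed.measurableSet
    d2.isClosed.measurableSet d3.isClosed.measurableSet
    (fun x y z h => ⟨(x, y, z), h, rfl⟩)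
    (fun x y z h => ⟨_, ⟨_, subset_thick a ha K h, rfl⟩, rfl⟩)
    (fun x y z h => ⟨_, ⟨_, subset_thick a ha _ ⟨_, subset_thick a ha K h, rfl⟩, rfl⟩, rfl⟩)
  have fK := hK.measure_lt_top (μ := volume)
  have f1 := d1.measure_lt_top (μ := volume)
  have f2 := d2.measure_lt_top (μ := volume)
  have f3 := d3.measure_lt_top (μ := volume)
  have lw' := ENNReal.toReal_mono (by finiteness) lw
  rw [ENNReal.toReal_pow, ENNReal.toReal_mul, ENNReal.toReal_mul] at lw'
  have am := amgm3 _ _ _ _ ENNReal.toReal_nonneg ENNReal.toReal_nonneg ENNReal.toReal_nonneg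
    ENNReal.toReal_nonneg lw'
  have tot : volume K + ENNReal.ofReal (2 * a) * volume A1 + ENNReal.ofReal (2 * a) * volume A2
      + ENNReal.ofReal (2 * a) * volume A3 ≤ volume L :=
    le_trans (add_le_add_left (le_trans (add_le_add_left v1 _) v2) _) (v3.trans hL3)
  have tot' := ENNReal.toReal_mono hL tot
  rw [ENNReal.toReal_add (by finiteness) (by finiteness),
    ENNReal.toReal_add (by finiteness) (by finiteness),
    ENNReal.toReal_add (by finiteness) (by finiteness), ENNReal.toReal_mul, ENNReal.toReal_mul,
    ENNReal.toReal_mul, ENNReal.toReal_ofReal (by linarith)] at tot'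
  nlinarith [mul_le_mul_of_nonneg_left am (show 0 ≤ 2 * a by linarith)]

end GrowthLW


section Final
open MeasureTheory

/-- Integer coordinates of the vertices of the cuboctahedron. -/
def cubo : Fin 12 → Fin 3 → ℤ :=
  ![![1, 1, 0], ![1, -1, 0], ![-1, 1, 0], ![-1, -1, 0],
    ![1, 0, 1], ![1, 0, -1], ![-1, 0, 1], ![-1, 0, -1],
    ![0, 1, 1], ![0, 1, -1], ![0, -1, 1], ![0, -1, -1]]

lemma cubo_norm : ∀ k, cubo k 0 * cubo k 0 + cubo k 1 * cubo k 1 + cubo k 2 * cubo k 2 = 2 := by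
  decide

lemma cubo_inner : ∀ j k, j ≠ k →
    cubo j 0 * cubo k 0 + cubo j 1 * cubo k 1 + cubo j 2 * cubo k 2 ≤ 1 := by
  decide

/-- The vertices of the cuboctahedron. -/
def cuboV (k : Fin 12) : E3 := (√2)⁻¹ • WithLp.toLp 2 (fun i => (cubo k i : ℝ))

lemma cuboV_inner (j k : Fin 12) : inner ℝ (cuboV j) (cuboV k) =
    ((cubo j 0 * cubo k 0 + cubo j 1 * cubo k 1 + cubo j 2 * cubo k 2 : ℤ) : ℝ) / 2 := by
  have h2 : (√2 : ℝ)⁻¹ * (√2)⁻¹ = 1 / 2 := by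
    rw [← mul_inv, Real.mul_self_sqrt (by norm_num)]; norm_num
  rw [cuboV, cuboV, real_inner_smul_left, real_inner_smul_right, ← mul_assoc, h2]
  simp only [PiLp.inner_apply, Fin.sum_univ_three]
  simp
  ring

lemma cuboV_norm (k : Fin 12) : ‖cuboV k‖ = 1 := by
  have h := cuboV_inner k k
  rw [cubo_norm, real_inner_self_eq_norm_sq] at h
  have : ‖cuboV k‖ ^ 2 = 1 := by rw [h]; norm_num
  nlinarith [norm_nonneg (cuboV k)]

lemma cuboV_le (j k : Fin 12) (h : j ≠ k) : inner ℝ (cuboV j) (cuboV k) ≤ (1 / 2 : ℝ) := by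
  rw [cuboV_inner]
  have := cubo_inner j k h
  have : ((cubo j 0 * cubo k 0 + cubo j 1 * cubo k 1 + cubo j 2 * cubo k 2 : ℤ) : ℝ) ≤ 1 := by
    exact_mod_cast this
  linarith

/-- Centers touching `x`. -/
def nbr (P : Finset E3) (x : E3) : Finset E3 := P.filter (fun y => dist x y = 2)

/-- Directions not covered by the caps of the neighbors. -/
def freeCone (P : Finset E3) (x : E3) : Set E3 :=
  {q | ∀ y ∈ nbr P x, inner ℝ q (y - x) ≤ ‖q‖}

lemma freeCone_closed (P : Finset E3) (x : E3) : IsClosed (freeCone P x) := by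
  have : freeCone P x = ⋂ y ∈ nbr P x, {q | inner ℝ q (y - x) ≤ ‖q‖} := by
    ext q; simp [freeCone]
  rw [this]
  refine isClosed_biInter fun y _ => ?_
  exact isClosed_le (by fun_prop) continuous_norm

lemma freeCone_cone (P : Finset E3) (x : E3) (r : ℝ) (hr : 0 < r) (q : E3) (hq : q ∈ freeCone P x) :
    r • q ∈ freeCone P x := by
  intro y hy
  rw [real_inner_smul_left, norm_smul, Real.norm_eq_abs, abs_of_pos hr]
  exact mul_le_mul_of_nonneg_left (hq y hy) hr.le

lemma nbr_count (P : Finset E3) (hpack : ∀ x ∈ P, ∀ y ∈ P, x ≠ y → 2 ≤ dist x y) (x : E3)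
    (g : O3) : (nbr P x).card +
      (Finset.univ.filter (fun k => (g : E3 →L[ℝ] E3) (cuboV k) ∈ freeCone P x)).card ≤ 12 := by
  set B := Finset.univ.filter (fun k => (g : E3 →L[ℝ] E3) (cuboV k) ∈ freeCone P x) with hB
  set f : E3 → E3 := fun y => (1 / 2 : ℝ) • (y - x) with hf
  set w : Fin 12 → E3 := fun k => (g : E3 →L[ℝ] E3) (cuboV k) with hw
  have hfi : Function.Injective f := by
    intro y y' h
    have := smul_right_injective E3 (show (1 / 2 : ℝ) ≠ 0 by norm_num) h
    exact sub_left_injective this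
  have hww : ∀ j k, inner ℝ (w j) (w k) = inner ℝ (cuboV j) (cuboV k) := fun j k =>
    Unitary.inner_map_map g _ _
  have hwn : ∀ k, ‖w k‖ = 1 := fun k => (Unitary.norm_map g _).trans (cuboV_norm k)
  have hwi : Function.Injective w := by
    intro j k h
    by_contra hjk
    have h1 := cuboV_le j k hjk
    rw [← hww, h, real_inner_self_eq_norm_sq, hwn] at h1
    norm_num at h1
  have hnorm : ∀ y ∈ nbr P x, ‖y - x‖ = 2 := by
    intro y hy
    rw [← dist_eq_norm, dist_comm]
    exact (Finset.mem_filter.1 hy).2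
  have hfn : ∀ y ∈ nbr P x, ‖f y‖ = 1 := by
    intro y hy
    rw [hf]
    simp only
    rw [norm_smul, hnorm y hy]; norm_num
  have hff : ∀ y ∈ nbr P x, ∀ y' ∈ nbr P x, y ≠ y' → inner ℝ (f y) (f y') ≤ (1 / 2 : ℝ) := by
    intro y hy y' hy' hne
    have hd := hpack y (Finset.mem_of_mem_filter y hy) y' (Finset.mem_of_mem_filter y' hy') hne
    have e : y - y' = (y - x) - (y' - x) := by abel
    rw [dist_eq_norm, e] at hd
    have e2 := norm_sub_sq_real (y - x) (y' - x)
    rw [hnorm y hy, hnorm y' hy'] at e2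
    simp only [hf]
    rw [real_inner_smul_left, real_inner_smul_right]
    nlinarith
  have hfw : ∀ y ∈ nbr P x, ∀ k ∈ B, inner ℝ (f y) (w k) ≤ (1 / 2 : ℝ) := by
    intro y hy k hk
    have h1 := (Finset.mem_filter.1 hk).2 y hy
    have h2 := hwn k
    simp only [hf]
    rw [real_inner_smul_left, real_inner_comm]
    simp only [hw] at h2 ⊢
    rw [h2] at h1
    linarith
  have hdisj : Disjoint ((nbr P x).image f) (B.image w) := by
    rw [Finset.disjoint_left]
    intro z hz hz'
    obtain ⟨y, hy, rfl⟩ := Finset.mem_image.1 hz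
    obtain ⟨k, hk, hk'⟩ := Finset.mem_image.1 hz'
    have := hfw y hy k hk
    rw [hk', real_inner_self_eq_norm_sq, hfn y hy] at this
    norm_num at this
  have hcard : (((nbr P x).image f) ∪ (B.image w)).card = (nbr P x).card + B.card := by
    rw [Finset.card_union_of_disjoint hdisj, Finset.card_image_of_injective _ hfi,
      Finset.card_image_of_injective _ hwi]
  rw [← hcard]
  apply kissing
  · intro z hz
    rcases Finset.mem_union.1 hz with h | h
    · obtain ⟨y, hy, rfl⟩ := Finset.mem_image.1 h
      exact hfn y hy
    · obtain ⟨k, hk, rfl⟩ := Finset.mem_image.1 h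
      exact hwn k
  · intro z hz z' hz' hne
    rcases Finset.mem_union.1 hz with h | h <;> rcases Finset.mem_union.1 hz' with h' | h'
    · obtain ⟨y, hy, rfl⟩ := Finset.mem_image.1 h
      obtain ⟨y', hy', rfl⟩ := Finset.mem_image.1 h'
      exact hff y hy y' hy' (fun e => hne (by rw [e]))
    · obtain ⟨y, hy, rfl⟩ := Finset.mem_image.1 h
      obtain ⟨k, hk, rfl⟩ := Finset.mem_image.1 h'
      exact hfw y hy k hk
    · obtain ⟨k, hk, rfl⟩ := Finset.mem_image.1 h
      obtain ⟨y, hy, rfl⟩ := Finset.mem_image.1 h'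
      rw [real_inner_comm]
      exact hfw y hy k hk
    · obtain ⟨j, hj, rfl⟩ := Finset.mem_image.1 h
      obtain ⟨k, hk, rfl⟩ := Finset.mem_image.1 h'
      rw [hww]
      exact cuboV_le j k (fun e => hne (by rw [e]))

/-- Spherical shell. -/
def shell : Set E3 := {q | 2 < ‖q‖ ∧ ‖q‖ ≤ 2174 / 1000}

lemma shell_eq : shell = Metric.closedBall 0 (2174 / 1000) \ Metric.closedBall 0 2 := by
  ext q
  simp [shell, and_comm]

lemma shell_meas : MeasurableSet shell := by
  rw [shell_eq]
  exact Metric.isClosed_closedBall.measurableSet.diff Metric.isClosed_closedBall.measurableSet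

lemma vol_cb (x : E3) (r : ℝ) (hr : 0 ≤ r) :
    (volume (Metric.closedBall x r)).toReal = r ^ 3 * (Real.pi * 4 / 3) := by
  rw [EuclideanSpace.volume_closedBall_fin_three, ENNReal.toReal_mul, ENNReal.toReal_pow,
    ENNReal.toReal_ofReal hr, ENNReal.toReal_ofReal (by positivity)]

lemma shell_vol : (volume shell).toReal = ((2174 / 1000) ^ 3 - 8) * (Real.pi * 4 / 3) := by
  rw [shell_eq, measure_diff (Metric.closedBall_subset_closedBall (by norm_num))
    Metric.isClosed_closedBall.measurableSet.nullMeasurableSet (by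
      exact (isCompact_closedBall _ _).measure_lt_top.ne), ENNReal.toReal_sub_of_le
      (measure_mono (Metric.closedBall_subset_closedBall (by norm_num)))
      (isCompact_closedBall _ _).measure_lt_top.ne, vol_cb _ _ (by norm_num),
    vol_cb _ _ (by norm_num)]
  ring

lemma shell_fin : volume shell ≠ ⊤ := by
  rw [shell_eq]
  exact ((measure_mono Set.diff_subset).trans_lt (isCompact_closedBall _ _).measure_lt_top).ne

lemma cone_shell (P : Finset E3) (hpack : ∀ x ∈ P, ∀ y ∈ P, x ≠ y → 2 ≤ dist x y) (x : E3) :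
    12 * (volume (freeCone P x ∩ shell)).toReal ≤
      (12 - (nbr P x).card : ℝ) * (volume shell).toReal := by
  have hle : (nbr P x).card ≤ 12 := le_trans (Nat.le_add_right _ _) (nbr_count P hpack x 1)
  have h := rot_avg (freeCone P x) shell (freeCone_closed P x) (freeCone_cone P x) shell_meas
    (fun q hq h0 => by
      have := hq.1
      rw [h0, norm_zero] at this
      linarith)
    (fun q q' hqq hq => ⟨by rw [← hqq]; exact hq.1, by rw [← hqq]; exact hq.2⟩) cuboV cuboV_norm
    (12 - (nbr P x).card) (fun g => by have := nbr_count P hpack x g; omega)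
  have h' := ENNReal.toReal_mono (ENNReal.mul_ne_top (by simp) shell_fin) h
  rw [ENNReal.toReal_mul, ENNReal.toReal_mul, ENNReal.toReal_natCast, Nat.cast_sub hle] at h'
  simpa using h'

/-- Coordinates as a triple. -/
def psi (q : E3) : ℝ × ℝ × ℝ := (q 0, q 1, q 2)

/-- Vector with given coordinates. -/
def phi (p : ℝ × ℝ × ℝ) : E3 := !₂[p.1, p.2.1, p.2.2]

lemma phi_psi (q : E3) : phi (psi q) = q := by
  ext i; fin_cases i <;> rfl

lemma psi_phi (p : ℝ × ℝ × ℝ) : psi (phi p) = p := rfl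

lemma psi_cont : Continuous psi := by unfold psi; fun_prop

lemma phi_mp : MeasurePreserving phi volume volume := by
  have h1 := (volume_preserving_piFinSuccAbove (fun _ : Fin 3 => ℝ) 0).symm
  have h2 := (volume_preserving_finTwoArrow ℝ).symm
  have h3 := (MeasurePreserving.id (volume : Measure ℝ)).prod h2
  have h4 := (PiLp.volume_preserving_toLp (Fin 3)).comp (h1.comp h3)
  have e : phi = (WithLp.toLp 2 ∘ (⇑(MeasurableEquiv.piFinSuccAbove (fun _ : Fin 3 => ℝ) 0).symm ∘
      Prod.map id ⇑(MeasurableEquiv.finTwoArrow (α := ℝ)).symm)) := by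
    funext p
    ext i
    fin_cases i <;> rfl
  rw [e]
  exact h4

/-- The union of balls of radius two. -/
def bigK (P : Finset E3) (r : ℝ) : Set E3 := ⋃ x ∈ P, Metric.closedBall x r

lemma bigK_compact (P : Finset E3) (r : ℝ) : IsCompact (bigK P r) :=
  P.isCompact_biUnion fun x _ => isCompact_closedBall x r

lemma growth (P : Finset E3) :
    (volume (bigK P 2)).toReal + 6 * (1 / 10) * (volume (bigK P 2)).toReal ^ ((2 : ℝ) / 3)
      ≤ (volume (bigK P (2174 / 1000))).toReal := by
  have e : ∀ r, psi '' bigK P r = phi ⁻¹' bigK P r := by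
    intro r
    ext p
    constructor
    · rintro ⟨q, hq, rfl⟩
      show phi (psi q) ∈ bigK P r
      rwa [phi_psi]
    · intro h
      exact ⟨phi p, h, psi_phi p⟩
  have vol : ∀ r, volume (psi '' bigK P r) = volume (bigK P r) := by
    intro r
    rw [e, phi_mp.measure_preimage (bigK_compact P r).isClosed.measurableSet.nullMeasurableSet]
  rw [← vol, ← vol]
  refine cube_growth (1 / 10) (by norm_num) _ _ ((bigK_compact P 2).image psi_cont)
    (((bigK_compact P _).image psi_cont).measure_lt_top.ne) ?_
  intro x y z h r hr s hs t ht
  rw [e] at h ⊢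
  obtain ⟨c, hc, hcb⟩ := Set.mem_iUnion₂.1 h
  refine Set.mem_iUnion₂.2 ⟨c, hc, ?_⟩
  rw [Metric.mem_closedBall] at hcb ⊢
  have hd : dist (phi (x + r, y + s, z + t)) (phi (x, y, z)) ≤ 174 / 1000 := by
    rw [EuclideanSpace.dist_eq, Fin.sum_univ_three]
    refine Real.sqrt_le_iff.2 ⟨by norm_num, ?_⟩
    simp only [phi, Real.dist_eq, sq_abs]
    simp
    have q : ∀ u : ℝ, u ∈ Set.Icc (-(1 / 10) : ℝ) (1 / 10) → u ^ 2 ≤ 1 / 100 := by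
      intro u hu
      nlinarith [hu.1, hu.2]
    have := q r hr
    have := q s hs
    have := q t ht
    norm_num
    linarith
  have := dist_triangle (phi (x + r, y + s, z + t)) (phi (x, y, z)) c
  linarith

lemma outer_cover (P : Finset E3) : bigK P (2174 / 1000) ⊆
    bigK P 2 ∪ ⋃ x ∈ P, (fun q => q - x) ⁻¹' (freeCone P x ∩ shell) := by
  intro q hq
  by_cases hq2 : q ∈ bigK P 2
  · exact Or.inl hq2
  right
  obtain ⟨c, hc, hcb⟩ := Set.mem_iUnion₂.1 hq
  obtain ⟨x, hx, hmin⟩ := P.exists_min_image (fun x => dist q x) ⟨c, hc⟩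
  refine Set.mem_iUnion₂.2 ⟨x, hx, ?_⟩
  have h1 : ‖q - x‖ ≤ 2174 / 1000 := by
    rw [← dist_eq_norm]
    exact (hmin c hc).trans hcb
  have h2 : 2 < ‖q - x‖ := by
    rw [← dist_eq_norm]
    by_contra hcon
    push Not at hcon
    exact hq2 (Set.mem_iUnion₂.2 ⟨x, hx, hcon⟩)
  refine ⟨?_, h2, h1⟩
  intro y hy
  have hy' := Finset.mem_filter.1 hy
  have hm := hmin y hy'.1
  simp only [dist_eq_norm] at hm
  have hn : ‖y - x‖ = 2 := by rw [← dist_eq_norm, dist_comm]; exact hy'.2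
  have e : q - y = (q - x) - (y - x) := by abel
  have e2 := norm_sub_sq_real (q - x) (y - x)
  rw [← e, hn] at e2
  have := pow_le_pow_left₀ (norm_nonneg _) hm 2
  linarith

lemma outer_vol (P : Finset E3) (hpack : ∀ x ∈ P, ∀ y ∈ P, x ≠ y → 2 ≤ dist x y) :
    12 * (volume (bigK P (2174 / 1000))).toReal ≤ 12 * (volume (bigK P 2)).toReal +
      (∑ x ∈ P, (12 - (nbr P x).card : ℝ)) * (volume shell).toReal := by
  have hfin : ∀ x, volume (freeCone P x ∩ shell) ≠ ⊤ := fun x =>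
    ((measure_mono Set.inter_subset_right).trans_lt shell_fin.lt_top).ne
  have h1 : volume (bigK P (2174 / 1000)) ≤
      volume (bigK P 2) + ∑ x ∈ P, volume (freeCone P x ∩ shell) := by
    refine (measure_mono (outer_cover P)).trans ((measure_union_le _ _).trans ?_)
    gcongr
    refine (measure_biUnion_finset_le _ _).trans (le_of_eq ?_)
    refine Finset.sum_congr rfl fun x _ => ?_
    simp only [sub_eq_add_neg]
    rw [measure_preimage_add_right]
  have hs : ∑ x ∈ P, volume (freeCone P x ∩ shell) ≠ ⊤ :=
    (ENNReal.sum_lt_top.2 fun x _ => (hfin x).lt_top).ne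
  have hK : volume (bigK P 2) ≠ ⊤ := (bigK_compact P 2).measure_lt_top.ne
  have h2 := ENNReal.toReal_mono (ENNReal.add_ne_top.2 ⟨hK, hs⟩) h1
  rw [ENNReal.toReal_add hK hs, ENNReal.toReal_sum fun x _ => hfin x] at h2
  have h3 : ∑ x ∈ P, 12 * (volume (freeCone P x ∩ shell)).toReal ≤
      ∑ x ∈ P, (12 - (nbr P x).card : ℝ) * (volume shell).toReal :=
    Finset.sum_le_sum fun x _ => cone_shell P hpack x
  rw [← Finset.mul_sum, ← Finset.sum_mul] at h3
  linarith

lemma vol_lower (P : Finset E3) (hpack : ∀ x ∈ P, ∀ y ∈ P, x ≠ y → 2 ≤ dist x y) :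
    P.card * (Real.pi * 4 / 3) ≤ (volume (bigK P 2)).toReal := by
  have hsub : (⋃ x ∈ P, Metric.ball x (1 : ℝ)) ⊆ bigK P 2 :=
    Set.iUnion₂_mono fun x _ => (Metric.ball_subset_ball (by norm_num)).trans
      Metric.ball_subset_closedBall
  have h := ENNReal.toReal_mono (bigK_compact P 2).measure_lt_top.ne (measure_mono (μ := volume) hsub)
  rw [measure_biUnion_finset _ (fun x _ => measurableSet_ball)] at h
  · refine le_trans (le_of_eq ?_) h
    have : ∀ x : E3, volume (Metric.ball x (1 : ℝ)) = ENNReal.ofReal (Real.pi * 4 / 3) := by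
      intro x
      rw [EuclideanSpace.volume_ball_fin_three]; simp
    simp only [this, Finset.sum_const, nsmul_eq_mul, ENNReal.toReal_mul, ENNReal.toReal_natCast]
    rw [ENNReal.toReal_ofReal (by positivity)]
  · intro x hx y hy hne
    exact Metric.ball_disjoint_ball (by
      have := hpack x hx y hy hne
      linarith)

lemma contacts_sum (P : Finset E3) : contactsOrdered P = ∑ x ∈ P, (nbr P x).card := by
  have h : (P.offDiag.filter fun p => dist p.1 p.2 = 2)
      = (P ×ˢ P).filter fun p => dist p.1 p.2 = 2 := by
    ext ⟨x, y⟩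
    simp only [Finset.mem_filter, Finset.mem_offDiag, Finset.mem_product]
    constructor
    · rintro ⟨⟨a, b, _⟩, c⟩
      exact ⟨⟨a, b⟩, c⟩
    · rintro ⟨⟨a, b⟩, c⟩
      refine ⟨⟨a, b, ?_⟩, c⟩
      rintro rfl
      rw [dist_self] at c
      norm_num at c
  rw [contactsOrdered, h, Finset.card_filter, Finset.sum_product]
  refine Finset.sum_congr rfl fun x _ => ?_
  rw [nbr, Finset.card_filter]

lemma final_num (n D V : ℝ) (hn : 0 < n) (hV : n * (Real.pi * 4 / 3) ≤ V)
    (h : 12 * (6 * (1 / 10) * V ^ ((2 : ℝ) / 3)) ≤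
      D * (((2174 / 1000) ^ 3 - 8) * (Real.pi * 4 / 3))) :
    1.852 * n ^ ((2 : ℝ) / 3) < D := by
  set κ := Real.pi * 4 / 3 with hκ
  have hκ0 : 0 < κ := by positivity
  have hκ1 : κ ≤ (162 / 100) ^ 3 := by
    have := Real.pi_lt_d2
    rw [hκ]; norm_num; linarith
  have hk3 : κ ^ ((1 : ℝ) / 3) ≤ 162 / 100 := by
    have := Real.rpow_le_rpow hκ0.le hκ1 (show (0 : ℝ) ≤ 1 / 3 by norm_num)
    rwa [← Real.rpow_natCast, ← Real.rpow_mul (by norm_num),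
      show ((3 : ℕ) : ℝ) * (1 / 3) = 1 by norm_num, Real.rpow_one] at this
  have hk : κ = κ ^ ((2 : ℝ) / 3) * κ ^ ((1 : ℝ) / 3) := by
    rw [← Real.rpow_add hκ0]; norm_num
  have hk23 : 0 < κ ^ ((2 : ℝ) / 3) := Real.rpow_pos_of_pos hκ0 _
  have hn23 : 0 < n ^ ((2 : ℝ) / 3) := Real.rpow_pos_of_pos hn _
  have hk2 : κ ≤ κ ^ ((2 : ℝ) / 3) * (162 / 100) := by
    calc κ = κ ^ ((2 : ℝ) / 3) * κ ^ ((1 : ℝ) / 3) := hk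
      _ ≤ _ := mul_le_mul_of_nonneg_left hk3 hk23.le
  have hV2 : n ^ ((2 : ℝ) / 3) * κ ^ ((2 : ℝ) / 3) ≤ V ^ ((2 : ℝ) / 3) := by
    rw [← Real.mul_rpow hn.le hκ0.le]
    exact Real.rpow_le_rpow (by positivity) hV (by norm_num)
  have h1 : n ^ ((2 : ℝ) / 3) * κ ≤ V ^ ((2 : ℝ) / 3) * (162 / 100) := by
    calc n ^ ((2 : ℝ) / 3) * κ ≤ n ^ ((2 : ℝ) / 3) * (κ ^ ((2 : ℝ) / 3) * (162 / 100)) :=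
          mul_le_mul_of_nonneg_left hk2 hn23.le
      _ = (n ^ ((2 : ℝ) / 3) * κ ^ ((2 : ℝ) / 3)) * (162 / 100) := by ring
      _ ≤ _ := mul_le_mul_of_nonneg_right hV2 (by norm_num)
  have h2 : (n ^ ((2 : ℝ) / 3) * (72 / 10)) * κ ≤
      (D * (((2174 / 1000) ^ 3 - 8) * (162 / 100))) * κ := by linarith
  have h3 := le_of_mul_le_mul_right h2 hκ0
  norm_num at h3 ⊢
  linarith

end Final

/-- For any `n ≥ 2` points in `ℝ³` with pairwise distances at least `2`, the number of
pairs at distance exactly `2` is strictly less than `6n - 0.926 n^(2/3)`. -/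
theorem contact_upper_bound_space (n : ℕ) (hn : 2 ≤ n)
    (P : Finset (EuclideanSpace ℝ (Fin 3))) (hcard : P.card = n)
    (hpack : ∀ x ∈ P, ∀ y ∈ P, x ≠ y → 2 ≤ dist x y) :
    (contactsOrdered P : ℝ) < 2 * (6 * n - 0.926 * (n : ℝ) ^ ((2 : ℝ) / 3)) := by
  have h1 := growth P
  have h2 := outer_vol P hpack
  have h3 := vol_lower P hpack
  rw [shell_vol] at h2
  rw [hcard] at h3
  have hn0 : (0 : ℝ) < n := by
    have : (2 : ℝ) ≤ n := by exact_mod_cast hn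
    linarith
  have h4 := final_num n (∑ x ∈ P, (12 - (nbr P x).card : ℝ)) _ hn0 h3 (by linarith)
  rw [Finset.sum_sub_distrib, Finset.sum_const, nsmul_eq_mul, hcard] at h4
  have h5 : (contactsOrdered P : ℝ) = ∑ x ∈ P, ((nbr P x).card : ℝ) := by
    rw [contacts_sum]; push_cast; rfl
  rw [h5]
  norm_num at h4 ⊢
  linarith
end
end

section
/- Let K be an o-symmetric convex body in ℝ^d (d ≥ 2) and let c₁+K, …, c_n+K be a packing of n > 1 translates of K (pairwise disjoint interiors). Then n·vol_d(K) ≤ δ(K) · vol_d(⋃_{i=1}^n (c_i + 2K)), where δ(K) is the supremal density of packings of translates of K in ℝ^d. -/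
open scoped Classical ENNReal Pointwise
open MeasureTheory

noncomputable section

/-- A family of translates of `K` by the set of vectors `C` is a packing if distinct
translates have disjoint interiors. -/
def IsTranslatePacking {d : ℕ} (K : Set (EuclideanSpace ℝ (Fin d)))
    (C : Set (EuclideanSpace ℝ (Fin d))) : Prop :=
  ∀ c ∈ C, ∀ c' ∈ C, c ≠ c' → Disjoint (interior (c +ᵥ K)) (interior (c' +ᵥ K))

/-- The packing density `δ(K)` of a convex body `K ⊆ ℝ^d`: the supremum, over all
packings of translates of `K`, of the upper density of the packing. -/
def packingDensity {d : ℕ} (K : Set (EuclideanSpace ℝ (Fin d))) : ℝ≥0∞ :=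
  ⨆ (C : Set (EuclideanSpace ℝ (Fin d))) (_ : IsTranslatePacking K C),
    Filter.limsup
      (fun R : ℝ =>
        volume ((⋃ c ∈ C, c +ᵥ K) ∩ Metric.ball (0 : EuclideanSpace ℝ (Fin d)) R) /
          volume (Metric.ball (0 : EuclideanSpace ℝ (Fin d)) R))
      Filter.atTop

/-- Existence of sparse lattices together with a good fundamental domain. -/
lemma exists_sparse_lattice (d : ℕ) (r : ℝ) (hr : 0 < r) :
    ∃ (L : AddSubgroup (EuclideanSpace ℝ (Fin d))) (F : Set (EuclideanSpace ℝ (Fin d))),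
      Countable L ∧ IsAddFundamentalDomain L F volume ∧
      (∀ x, ∃ g ∈ L, g + x ∈ F) ∧ Bornology.IsBounded F ∧ volume F ≠ 0 ∧
      (∀ g ∈ L, g ≠ 0 → r ≤ ‖g‖) ∧ (∀ ρ : ℝ, {g | g ∈ L ∧ ‖g‖ < ρ}.Finite) := by
  let b₀ := (EuclideanSpace.basisFun (Fin d) ℝ).toBasis
  let b : Module.Basis (Fin d) ℝ (EuclideanSpace ℝ (Fin d)) :=
    b₀.unitsSMul (fun _ => Units.mk0 r hr.ne')
  have hb : ∀ i, b i = r • EuclideanSpace.basisFun (Fin d) ℝ i := by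
    intro i
    simp [b, b₀, Module.Basis.unitsSMul_apply, Units.smul_def]
  refine ⟨(Submodule.span ℤ (Set.range b)).toAddSubgroup, ZSpan.fundamentalDomain b,
    inferInstanceAs (Countable (Submodule.span ℤ (Set.range b))),
    ZSpan.isAddFundamentalDomain' b volume, ?_, ZSpan.fundamentalDomain_isBounded b,
    ZSpan.measure_fundamentalDomain_ne_zero b, ?_, ?_⟩
  · intro x
    obtain ⟨g, hg, -⟩ := ZSpan.exist_unique_vadd_mem_fundamentalDomain b x
    exact ⟨g, g.2, hg⟩
  · intro g hg hg0
    have hg' : g ∈ Submodule.span ℤ (Set.range b) := hg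
    rw [b.mem_span_iff_repr_mem ℤ] at hg'
    have hex : ∃ i, b.repr g i ≠ 0 := by
      by_contra! h
      apply hg0
      apply b.repr.injective
      ext i
      simp [h i]
    obtain ⟨i, hi⟩ := hex
    obtain ⟨m, hm⟩ := hg' i
    have hgi : g i = r * (m : ℝ) := by
      have h1 : g = ∑ j, b.repr g j • b j := (b.sum_repr g).symm
      have h2 : g i = b.repr g i * r := by
        conv_lhs => rw [h1]
        simp [hb, Finset.sum_apply, Pi.single_apply]
      rw [h2, ← hm]
      simp [mul_comm]
    have hm0 : m ≠ 0 := by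
      rintro rfl
      apply hi
      rw [← hm]
      simp
    have h1 : (1 : ℝ) ≤ |(m : ℝ)| := by
      exact_mod_cast Int.one_le_abs hm0
    calc r ≤ r * |(m : ℝ)| := by nlinarith
      _ = ‖g i‖ := by rw [hgi, Real.norm_eq_abs, abs_mul, abs_of_pos hr]
      _ ≤ ‖g‖ := PiLp.norm_apply_le g i
  · intro ρ
    refine (ZSpan.setFinite_inter b (s := Metric.ball 0 ρ) Metric.isBounded_ball).subset ?_
    rintro g ⟨h1, h2⟩
    exact ⟨by simpa using h2, h1⟩

/-- `X` is a set of representatives of an `L`-periodic packing with difference body `W`. -/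
def PerSep {d : ℕ} (L : AddSubgroup (EuclideanSpace ℝ (Fin d)))
    (W : Set (EuclideanSpace ℝ (Fin d))) (X : Set (EuclideanSpace ℝ (Fin d))) : Prop :=
  ∀ x ∈ X, ∀ y ∈ X, ∀ g ∈ L, (x ≠ y ∨ g ≠ 0) → x - y + g ∉ W

lemma disjoint_vadd_iff {d : ℕ} (U : Set (EuclideanSpace ℝ (Fin d)))
    (a b : EuclideanSpace ℝ (Fin d)) : Disjoint (a +ᵥ U) (b +ᵥ U) ↔ b - a ∉ U - U := by
  rw [Set.disjoint_left]
  constructor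
  · rintro h ⟨u, hu, v, hv, huv⟩
    refine h (a := a + u) ⟨u, hu, rfl⟩ ⟨v, hv, ?_⟩
    simp only [vadd_eq_add] at *
    have : b = a + (u - v) := by rw [huv]; abel
    rw [this]; abel
  · rintro h z ⟨u, hu, rfl⟩ ⟨v, hv, huv⟩
    refine h ⟨u, hu, v, hv, ?_⟩
    simp only [vadd_eq_add] at *
    rw [sub_eq_sub_iff_add_eq_add, ← huv.trans (add_comm a u), add_comm]

lemma disjoint_vadd_of_perSep {d : ℕ} {L : AddSubgroup (EuclideanSpace ℝ (Fin d))}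
    {U : Set (EuclideanSpace ℝ (Fin d))} {X : Set (EuclideanSpace ℝ (Fin d))}
    (hX : PerSep L (U - U) X) {x y g h : EuclideanSpace ℝ (Fin d)} (hx : x ∈ X) (hy : y ∈ X)
    (hg : g ∈ L) (hh : h ∈ L) (hne : x ≠ y ∨ g ≠ h) :
    Disjoint ((g + x) +ᵥ U) ((h + y) +ᵥ U) := by
  rw [disjoint_vadd_iff]
  have := hX y hy x hx (h - g) (L.sub_mem hh hg)
    (hne.imp (fun h => h.symm) (fun h => sub_ne_zero.2 h.symm))
  rwa [show h + y - (g + x) = y - x + (h - g) by abel]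

lemma volume_biUnion_vadd {d : ℕ} {U : Set (EuclideanSpace ℝ (Fin d))} (hU : IsOpen U)
    (X : Finset (EuclideanSpace ℝ (Fin d)))
    (hX : ∀ x ∈ X, ∀ y ∈ X, x ≠ y → Disjoint (x +ᵥ U) (y +ᵥ U)) :
    volume (⋃ x ∈ X, x +ᵥ U) = X.card * volume U := by
  rw [measure_biUnion_finset (fun x hx y hy hxy => hX x hx y hy hxy)
    (fun x _ => (hU.vadd x).measurableSet)]
  simp

/-- Volume bound on periodic packings. -/
lemma perSep_card_le {d : ℕ} {L : AddSubgroup (EuclideanSpace ℝ (Fin d))} [Countable L]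
    {F U : Set (EuclideanSpace ℝ (Fin d))} (hF : IsAddFundamentalDomain L F volume)
    (hU : IsOpen U) (X : Finset (EuclideanSpace ℝ (Fin d)))
    (hX : PerSep L (U - U) (X : Set (EuclideanSpace ℝ (Fin d)))) :
    X.card * volume U ≤ volume F := by
  have hd : ∀ x ∈ X, ∀ y ∈ X, x ≠ y → Disjoint (x +ᵥ U) (y +ᵥ U) := by
    intro x hx y hy hxy
    simpa using disjoint_vadd_of_perSep hX hx hy L.zero_mem L.zero_mem (Or.inl hxy)
  rw [← volume_biUnion_vadd hU X hd]
  by_contra! h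
  have hm : MeasurableSet (⋃ x ∈ X, x +ᵥ U) :=
    Finset.measurableSet_biUnion _ fun x _ => (hU.vadd x).measurableSet
  obtain ⟨g, k, hgk, hn⟩ := exists_pair_mem_lattice_not_disjoint_vadd hF
    hm.nullMeasurableSet h
  apply hn
  rw [Set.disjoint_left]
  rintro z ⟨p, hp, rfl⟩ ⟨q, hq, hpq⟩
  simp only [Set.mem_iUnion] at hp hq
  obtain ⟨x, hx, u, hu, rfl⟩ := hp
  obtain ⟨y, hy, v, hv, rfl⟩ := hq
  have hdj := Set.disjoint_left.1 (disjoint_vadd_of_perSep hX hx hy g.2 k.2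
    (Or.inr fun h => hgk (Subtype.ext h)))
  refine hdj (a := (g : EuclideanSpace ℝ (Fin d)) + x + u)
    ⟨u, hu, rfl⟩ ⟨v, hv, ?_⟩
  simp only [vadd_eq_add, AddSubgroup.vadd_def] at *
  rw [add_assoc, hpq, add_assoc]

/-- A periodic packing gives a lower bound for the packing density. -/
lemma perSep_density {d : ℕ} {L : AddSubgroup (EuclideanSpace ℝ (Fin d))}
    {F K : Set (EuclideanSpace ℝ (Fin d))} (hcov : ∀ x, ∃ g ∈ L, g + x ∈ F)
    (hFb : Bornology.IsBounded F) (hF0 : volume F ≠ 0)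
    (hfin : ∀ ρ : ℝ, {g | g ∈ L ∧ ‖g‖ < ρ}.Finite) (hK : IsCompact K)
    (X : Finset (EuclideanSpace ℝ (Fin d)))
    (hX : PerSep L (interior K - interior K) (X : Set (EuclideanSpace ℝ (Fin d)))) :
    X.card * volume (interior K) ≤ packingDensity K * volume F := by
  set U := interior K with hUdef
  have hU : IsOpen U := isOpen_interior
  have hFt : volume F ≠ ⊤ := hFb.measure_lt_top.ne
  -- a common bound
  set s : Set (EuclideanSpace ℝ (Fin d)) := ⋃ x ∈ X, x +ᵥ U with hs
  have hdX : ∀ x ∈ X, ∀ y ∈ X, x ≠ y → Disjoint (x +ᵥ U) (y +ᵥ U) := by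
    intro x hx y hy hxy
    simpa using disjoint_vadd_of_perSep hX hx hy L.zero_mem L.zero_mem (Or.inl hxy)
  have hsvol : volume s = X.card * volume U := volume_biUnion_vadd hU X hdX
  have hsm : IsOpen s := isOpen_biUnion fun x _ => hU.vadd x
  have hUb : Bornology.IsBounded U := hK.isBounded.subset interior_subset
  have hsb : Bornology.IsBounded s := by
    rw [hs]
    exact (Bornology.isBounded_biUnion X.finite_toSet).2 fun x _ => hUb.vadd x
  obtain ⟨D, hD0, hD⟩ := (hFb.union hsb).subset_ball_lt 0 (0 : EuclideanSpace ℝ (Fin d))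
  have hFD : ∀ x ∈ F, ‖x‖ < D := fun x hx => by simpa using hD (Or.inl hx)
  have hsD : ∀ x ∈ s, ‖x‖ < D := fun x hx => by simpa using hD (Or.inr hx)
  set C : Set (EuclideanSpace ℝ (Fin d)) := {c | ∃ g ∈ L, ∃ x ∈ X, c = g + x} with hC
  have hCp : IsTranslatePacking K C := by
    rintro c ⟨g, hg, x, hx, rfl⟩ c' ⟨h, hh, y, hy, rfl⟩ hne
    rw [interior_vadd, interior_vadd]
    refine disjoint_vadd_of_perSep hX hx hy hg hh ?_
    by_contra! hcon
    exact hne (by rw [hcon.1, hcon.2])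
  set A : Set (EuclideanSpace ℝ (Fin d)) := ⋃ c ∈ C, c +ᵥ K with hA
  have key : ∀ R : ℝ, X.card * volume U * volume (Metric.ball (0 : EuclideanSpace ℝ (Fin d))
      (R - 2 * D)) ≤ volume (A ∩ Metric.ball 0 R) * volume F := by
    intro R
    set G := (hfin (R - D)).toFinset with hG
    have hGm : ∀ g, g ∈ G ↔ g ∈ L ∧ ‖g‖ < R - D := by simp [hG]
    have h1 : volume (Metric.ball (0 : EuclideanSpace ℝ (Fin d)) (R - 2 * D)) ≤
        G.card * volume F := by
      calc volume (Metric.ball (0 : EuclideanSpace ℝ (Fin d)) (R - 2 * D))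
          ≤ volume (⋃ g ∈ G, g +ᵥ F) := by
            apply measure_mono
            intro z hz
            obtain ⟨g, hg, hgz⟩ := hcov z
            have hz' : ‖z‖ < R - 2 * D := by simpa using hz
            have := hFD _ hgz
            simp only [Set.mem_iUnion]
            refine ⟨-g, (hGm _).2 ⟨L.neg_mem hg, ?_⟩, g + z, hgz, by simp⟩
            calc ‖-g‖ = ‖z - (g + z)‖ := by congr 1; abel
              _ ≤ ‖z‖ + ‖g + z‖ := norm_sub_le _ _
              _ < R - D := by linarith
        _ ≤ ∑ g ∈ G, volume (g +ᵥ F) := measure_biUnion_finset_le _ _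
        _ = G.card * volume F := by simp
    have h2 : (G.card : ℝ≥0∞) * (X.card * volume U) ≤ volume (A ∩ Metric.ball 0 R) := by
      rw [← hsvol, ← volume_biUnion_vadd hsm G]
      · apply measure_mono
        intro z hz
        simp only [Set.mem_iUnion] at hz
        obtain ⟨g, hg, p, hp, rfl⟩ := hz
        have hg' := (hGm g).1 hg
        have hpD := hsD p hp
        simp only [hs, Set.mem_iUnion] at hp
        obtain ⟨x, hx, u, hu, rfl⟩ := hp
        simp only [vadd_eq_add] at *
        refine ⟨?_, ?_⟩
        · simp only [hA, Set.mem_iUnion]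
          exact ⟨g + x, ⟨g, hg'.1, x, hx, rfl⟩, u, interior_subset hu, by simp [add_assoc]⟩
        · rw [mem_ball_zero_iff]
          have := norm_add_le g (x + u)
          linarith [hg'.2]
      · intro g hg h hh hgh
        rw [Set.disjoint_left]
        rintro z ⟨p, hp, rfl⟩ ⟨q, hq, hpq⟩
        simp only [hs, Set.mem_iUnion] at hp hq
        obtain ⟨x, hx, u, hu, rfl⟩ := hp
        obtain ⟨y, hy, v, hv, rfl⟩ := hq
        have hdj := Set.disjoint_left.1 (disjoint_vadd_of_perSep hX hx hy ((hGm g).1 hg).1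
          ((hGm h).1 hh).1 (Or.inr hgh))
        refine hdj (a := g + x + u) ⟨u, hu, rfl⟩ ⟨v, hv, ?_⟩
        simp only [vadd_eq_add] at *
        rw [add_assoc, hpq, add_assoc]
    calc X.card * volume U * volume (Metric.ball (0 : EuclideanSpace ℝ (Fin d)) (R - 2 * D))
        ≤ X.card * volume U * (G.card * volume F) := by gcongr
      _ = (G.card * (X.card * volume U)) * volume F := by ring
      _ ≤ _ := by gcongr
  rw [← ENNReal.div_le_iff hF0 hFt]
  unfold packingDensity
  refine le_trans ?_ (le_iSup₂ (f := fun (C : Set (EuclideanSpace ℝ (Fin d)))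
    (_ : IsTranslatePacking K C) => Filter.limsup
      (fun R : ℝ =>
        volume ((⋃ c ∈ C, c +ᵥ K) ∩ Metric.ball (0 : EuclideanSpace ℝ (Fin d)) R) /
          volume (Metric.ball (0 : EuclideanSpace ℝ (Fin d)) R))
      Filter.atTop) C hCp)
  have hlim : Filter.Tendsto (fun R : ℝ => X.card * volume U / volume F *
      ENNReal.ofReal (((R - 2 * D) / R) ^ d)) Filter.atTop
      (nhds (X.card * volume U / volume F)) := by
    have h1 : Filter.Tendsto (fun R : ℝ => (R - 2 * D) / R) Filter.atTop (nhds 1) := by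
      have h2 : Filter.Tendsto (fun R : ℝ => 1 - 2 * D / R) Filter.atTop (nhds (1 - 0)) :=
        tendsto_const_nhds.sub (tendsto_const_nhds.div_atTop Filter.tendsto_id)
      rw [sub_zero] at h2
      refine h2.congr' ?_
      filter_upwards [Filter.eventually_gt_atTop 0] with R hR
      field_simp
    have h3 := ENNReal.tendsto_ofReal (h1.pow d)
    rw [one_pow, ENNReal.ofReal_one] at h3
    have h4 := ENNReal.Tendsto.const_mul (a := X.card * volume U / volume F) h3
      (Or.inl one_ne_zero)
    rwa [mul_one] at h4
  rw [← hlim.limsup_eq]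
  refine Filter.limsup_le_limsup ?_
  filter_upwards [Filter.eventually_gt_atTop (2 * D)] with R hR
  have hR0 : 0 < R := by linarith
  have hball : volume (Metric.ball (0 : EuclideanSpace ℝ (Fin d)) (R - 2 * D)) =
      ENNReal.ofReal (((R - 2 * D) / R) ^ d) *
        volume (Metric.ball (0 : EuclideanSpace ℝ (Fin d)) R) := by
    have := Measure.addHaar_ball_mul_of_pos (volume : Measure (EuclideanSpace ℝ (Fin d))) 0
      (r := (R - 2 * D) / R) (div_pos (by linarith) hR0) R
    rw [div_mul_cancel₀ _ hR0.ne', finrank_euclideanSpace_fin] at this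
    exact this
  have hB0 : volume (Metric.ball (0 : EuclideanSpace ℝ (Fin d)) R) ≠ 0 :=
    (Metric.measure_ball_pos _ _ hR0).ne'
  have hBt : volume (Metric.ball (0 : EuclideanSpace ℝ (Fin d)) R) ≠ ⊤ :=
    measure_ball_lt_top.ne
  rw [ENNReal.le_div_iff_mul_le (Or.inl hB0) (Or.inl hBt), mul_assoc, ← hball,
    mul_comm, ← mul_div_assoc, ENNReal.div_le_iff hF0 hFt, mul_comm]
  exact key R

/-- Averaging: if every translate `t + S` meets at least `n` of the periodic orbits,
then `n vol F ≤ N vol S`. -/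
lemma averaging {d : ℕ} {L : AddSubgroup (EuclideanSpace ℝ (Fin d))} [Countable L]
    {F S : Set (EuclideanSpace ℝ (Fin d))} (hF : IsAddFundamentalDomain L F volume)
    (hS : IsOpen S) (X : Finset (EuclideanSpace ℝ (Fin d))) (n : ℕ)
    (h : ∀ t, n ≤ (X.filter (fun x => ∃ g ∈ L, x + g - t ∈ S)).card) :
    n * volume F ≤ X.card * volume S := by
  let T : EuclideanSpace ℝ (Fin d) → Set (EuclideanSpace ℝ (Fin d)) :=
    fun x => {t | ∃ g ∈ L, x + g - t ∈ S}
  have hT : ∀ x, T x = ⋃ g : L, {t | x + (g : EuclideanSpace ℝ (Fin d)) - t ∈ S} := by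
    intro x; ext t; simp [T]
  have hTm : ∀ x, MeasurableSet (T x) := by
    intro x
    rw [hT]
    exact MeasurableSet.iUnion fun g =>
      (hS.preimage (by fun_prop : Continuous fun t => x + (g : EuclideanSpace ℝ (Fin d)) - t)).measurableSet
  have hTv : ∀ x, volume (T x ∩ F) ≤ volume S := by
    intro x
    have h1 : volume {t | x - t ∈ S} = volume S :=
      (Measure.measurePreserving_sub_left volume x).measure_preimage hS.measurableSet.nullMeasurableSet
    rw [← h1, hF.measure_eq_tsum {t | x - t ∈ S}, hT, Set.iUnion_inter]
    refine (measure_iUnion_le _).trans (le_of_eq ?_)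
    congr 1
    ext g
    congr 2
    ext t
    rw [Set.mem_vadd_set_iff_neg_vadd_mem]
    simp only [Set.mem_setOf_eq, AddSubgroup.vadd_def, vadd_eq_add, AddSubgroup.coe_neg]
    rw [show x + (g : EuclideanSpace ℝ (Fin d)) - t = x - (-(g : EuclideanSpace ℝ (Fin d)) + t) by abel]
  calc (n : ℝ≥0∞) * volume F = ∫⁻ t in F, (n : ℝ≥0∞) := by simp
    _ ≤ ∫⁻ t in F, ∑ x ∈ X, (T x).indicator 1 t := by
        refine lintegral_mono fun t => ?_
        have : ∑ x ∈ X, (T x).indicator (1 : EuclideanSpace ℝ (Fin d) → ℝ≥0∞) t =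
            ((X.filter (fun x => ∃ g ∈ L, x + g - t ∈ S)).card : ℝ≥0∞) := by
          rw [Finset.card_filter]
          push_cast
          refine Finset.sum_congr rfl fun x _ => ?_
          simp [Set.indicator_apply, T]
        rw [this]
        refine Nat.cast_le.2 ?_
        convert h t
    _ = ∑ x ∈ X, ∫⁻ t in F, (T x).indicator 1 t :=
        lintegral_finsetSum _ fun x _ => measurable_one.indicator (hTm x)
    _ = ∑ x ∈ X, volume (T x ∩ F) := by
        refine Finset.sum_congr rfl fun x _ => ?_
        rw [lintegral_indicator_one (hTm x), Measure.restrict_apply (hTm x)]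
    _ ≤ ∑ x ∈ X, volume S := Finset.sum_le_sum fun x _ => hTv x
    _ = X.card * volume S := by simp

/-- For an `o`-symmetric convex body `K ⊆ ℝ^d` (`d ≥ 2`) and any packing
`c₁+K, …, c_n+K` of `n > 1` translates of `K`, one has
`n·vol_d(K) ≤ δ(K)·vol_d(⋃ᵢ (cᵢ + 2K))`. -/
theorem translate_packing_density_bound (d n : ℕ) (hd : 2 ≤ d) (hn : 1 < n)
    (K : Set (EuclideanSpace ℝ (Fin d))) (hKconv : Convex ℝ K) (hKcomp : IsCompact K)
    (hKint : (interior K).Nonempty) (hKsymm : K = -K)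
    (c : Fin n → EuclideanSpace ℝ (Fin d))
    (hpack : ∀ i j, i ≠ j → Disjoint (interior (c i +ᵥ K)) (interior (c j +ᵥ K))) :
    (n : ℝ≥0∞) * volume K ≤
      packingDensity K * volume (⋃ i, c i +ᵥ (2 : ℝ) • K) := by
  set U := interior K with hUdef
  have hU : IsOpen U := isOpen_interior
  have hUvol : volume U = volume K :=
    (measure_interior_of_null_frontier (hKconv.addHaar_frontier volume))
  have hU0 : volume U ≠ 0 := (hU.measure_pos volume hKint).ne'
  set W := U - U with hW
  have hWo : IsOpen W := hU.sub_right
  have hWneg : ∀ w, w ∈ W → -w ∈ W := by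
    rintro w ⟨u, hu, v, hv, rfl⟩
    exact ⟨v, hv, u, hu, by simp⟩
  have hW0 : (0 : EuclideanSpace ℝ (Fin d)) ∈ W := by
    obtain ⟨u, hu⟩ := hKint
    exact ⟨u, hu, u, hu, sub_self u⟩
  have hWK : W ⊆ (2 : ℝ) • K := by
    rintro w ⟨u, hu, v, hv, rfl⟩
    have hv' : -v ∈ K := by
      have := interior_subset hv
      rw [hKsymm] at this
      simpa using this
    refine ⟨(1 / 2 : ℝ) • u + (1 / 2 : ℝ) • (-v),
      hKconv (interior_subset hu) hv' (by norm_num) (by norm_num) (by norm_num), ?_⟩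
    simp only [smul_add, smul_smul]
    norm_num [sub_eq_add_neg]
  have hWb : Bornology.IsBounded W :=
    ((hKcomp.smul (2 : ℝ)).isBounded).subset hWK
  have hsep : ∀ i j, i ≠ j → c i - c j ∉ W := by
    intro i j hij
    have := hpack j i hij.symm
    rwa [interior_vadd, interior_vadd, disjoint_vadd_iff] at this
  have hcinj : Function.Injective c := by
    intro i j hij
    by_contra hne
    exact hsep i j hne (by rw [hij, sub_self]; exact hW0)
  -- a lattice sparse enough
  obtain ⟨r, hr0, hr⟩ : ∃ r : ℝ, 0 < r ∧ ∀ i j, ∀ w ∈ W, ‖w - (c i - c j)‖ < r := by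
    have hb : Bornology.IsBounded (W - (Set.range c - Set.range c)) :=
      hWb.sub ((Set.finite_range c).isBounded.sub (Set.finite_range c).isBounded)
    obtain ⟨r, hr0, hr⟩ := hb.subset_ball_lt 0 (0 : EuclideanSpace ℝ (Fin d))
    refine ⟨r, hr0, fun i j w hw => ?_⟩
    have := hr (Set.sub_mem_sub hw (Set.sub_mem_sub (Set.mem_range_self i) (Set.mem_range_self j)))
    simpa using this
  obtain ⟨L, F, hLc, hF, hcov, hFb, hF0, hLr, hfin⟩ := exists_sparse_lattice d r hr0
  have hFt : volume F ≠ ⊤ := hFb.measure_lt_top.ne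
  have hcL : ∀ i j, ∀ g ∈ L, (i ≠ j ∨ g ≠ 0) → c i - c j + g ∉ W := by
    intro i j g hg hne hmem
    by_cases hg0 : g = 0
    · subst hg0
      rw [add_zero] at hmem
      exact hsep i j (by simpa using hne) hmem
    · have h1 := hr i j _ hmem
      rw [add_sub_cancel_left] at h1
      exact absurd (hLr g hg hg0) (not_le.2 h1)
  -- a maximal periodic packing
  let P : ℕ → Prop := fun m => ∃ X : Finset (EuclideanSpace ℝ (Fin d)),
    PerSep L W (X : Set (EuclideanSpace ℝ (Fin d))) ∧ X.card = m
  obtain ⟨B, hB⟩ : ∃ B : ℕ, ∀ m, P m → m ≤ B := by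
    obtain ⟨B, hB⟩ := ENNReal.exists_nat_gt (ENNReal.div_ne_top hFt hU0)
    refine ⟨B, ?_⟩
    rintro m ⟨X, hX, rfl⟩
    have h1 := perSep_card_le hF hU X hX
    have h2 : (X.card : ℝ≥0∞) ≤ volume F / volume U := by
      rw [ENNReal.le_div_iff_mul_le (Or.inl hU0)
        (Or.inl (hUvol ▸ hKcomp.measure_lt_top.ne))]
      exact h1
    exact_mod_cast (h2.trans hB.le)
  have hP0 : P 0 := ⟨∅, by intro x hx; simp at hx, rfl⟩
  obtain ⟨X, hX, hXN⟩ := Nat.findGreatest_spec (P := P) (Nat.zero_le B) hP0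
  have hmax : ∀ m, P m → m ≤ X.card := by
    intro m hm
    rw [hXN]
    exact Nat.le_findGreatest (hB m hm) hm
  set S : Set (EuclideanSpace ℝ (Fin d)) := ⋃ i, c i +ᵥ W with hS
  have hSo : IsOpen S := isOpen_iUnion fun i => hWo.vadd (c i)
  have hSsub : S ⊆ ⋃ i, c i +ᵥ (2 : ℝ) • K :=
    Set.iUnion_mono fun i => Set.vadd_set_mono hWK
  have hcount : ∀ t, n ≤ (X.filter (fun x => ∃ g ∈ L, x + g - t ∈ S)).card := by
    intro t
    set Y := X.filter (fun x => ¬ ∃ g ∈ L, x + g - t ∈ S) with hY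
    set Z := Finset.univ.image (fun i => t + c i) with hZ
    have hZc : Z.card = n := by
      rw [hZ, Finset.card_image_of_injective]
      · simp
      · intro i j hij
        exact hcinj (add_left_cancel hij)
    have hYZ : ∀ y ∈ Y, ∀ i, ∀ g ∈ L, y - (t + c i) + g ∉ W := by
      intro y hy i g hg hmem
      rw [hY, Finset.mem_filter] at hy
      refine hy.2 ⟨g, hg, ?_⟩
      rw [hS, Set.mem_iUnion]
      refine ⟨i, _, hmem, ?_⟩
      simp only [vadd_eq_add]
      abel
    have hdis : Disjoint Y Z := by
      rw [Finset.disjoint_left]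
      intro y hy hz
      rw [hZ, Finset.mem_image] at hz
      obtain ⟨i, -, rfl⟩ := hz
      exact hYZ _ hy i 0 L.zero_mem (by simpa using hW0)
    have hPn : P (Y ∪ Z).card := by
      refine ⟨Y ∪ Z, ?_, rfl⟩
      intro x hx y hy g hg hne
      rw [Finset.mem_coe, Finset.mem_union] at hx hy
      rcases hx with hx | hx <;> rcases hy with hy | hy
      · exact hX x (Finset.mem_filter.1 hx).1 y (Finset.mem_filter.1 hy).1 g hg hne
      · obtain ⟨i, -, rfl⟩ := Finset.mem_image.1 hy
        exact hYZ x hx i g hg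
      · obtain ⟨i, -, rfl⟩ := Finset.mem_image.1 hx
        intro hmem
        refine hYZ y hy i (-g) (L.neg_mem hg) ?_
        have := hWneg _ hmem
        rwa [show -(t + c i - y + g) = y - (t + c i) + -g by abel] at this
      · obtain ⟨i, -, rfl⟩ := Finset.mem_image.1 hx
        obtain ⟨j, -, rfl⟩ := Finset.mem_image.1 hy
        have := hcL i j g hg (hne.imp (fun h hij => h (by rw [hij])) id)
        rwa [add_sub_add_left_eq_sub]
    have h1 := hmax _ hPn
    rw [Finset.card_union_of_disjoint hdis, hZc] at h1
    have h2 : (X.filter (fun x => ∃ g ∈ L, x + g - t ∈ S)).card + Y.card = X.card := by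
      rw [hY]
      convert Finset.card_filter_add_card_filter_not (s := X)
        (fun x => ∃ g ∈ L, x + g - t ∈ S)
    omega
  have hav := averaging hF hSo X n hcount
  have hden := perSep_density hcov hFb hF0 hfin hKcomp X hX
  rw [← ENNReal.mul_le_mul_iff_left hF0 hFt, ← hUvol]
  calc (n : ℝ≥0∞) * volume U * volume F = (n * volume F) * volume U := by ring
    _ ≤ (X.card * volume S) * volume U := by gcongr
    _ = (X.card * volume U) * volume S := by ring
    _ ≤ (packingDensity K * volume F) * volume (⋃ i, c i +ᵥ (2 : ℝ) • K) := by
        gcongr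
    _ = packingDensity K * volume (⋃ i, c i +ᵥ (2 : ℝ) • K) * volume F := by ring
end
end
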